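/- arXiv:2107.00550 — 3 statements merged into one kernel-verified Lean document; each statement's English description precedes it below -/
import Mathlib

section
/- Let V be a good ssee and let k, N ∈ ℕ. Let F be a nonempty subset of [k]^{V_N} and let P = Forb_V(F). Then for every ε > 0 there exists n₀ such that for every n ≥ n₀ there exists a collection T_n of k-colouring templates for V_n satisfying: (a) P_n ⊆ ⋃_{t∈T_n} ⟨t⟩; (b) for each t ∈ T_n, there are at most ε·|binom(V_n,V_N)| pairs (φ, c) with φ ∈ binom(V_n,V_N), c ∈ F, and c ∈ ⟨t_{↓φ}⟩; and (c) |T_n| ≤ k^{ε|V_n|}. -/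
open MeasureTheory Filter Set

noncomputable section

/-- A set-sequence equipped with embeddings (ssee). -/
structure Ssee where
  V : ℕ → Type
  fin : ∀ n, Fintype (V n)
  dec : ∀ n, DecidableEq (V n)
  nonemp : ∀ n, Nonempty (V n)
  emb : (N n : ℕ) → Finset (V N → V n)
  emb_inj : ∀ N n, N ≤ n → ∀ φ ∈ emb N n, Function.Injective φ

attribute [instance] Ssee.fin Ssee.dec Ssee.nonemp

/-- `I(N,n)`: pairs of embeddings whose images intersect in exactly `i` elements,
summed over `1 < i < |V_N|`. -/
def Ssee.interCount (S : Ssee) (N n : ℕ) : ℕ :=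
  ((S.emb N n ×ˢ S.emb N n).filter (fun p =>
    1 < ((Finset.univ.image p.1) ∩ (Finset.univ.image p.2)).card ∧
    ((Finset.univ.image p.1) ∩ (Finset.univ.image p.2)).card < Fintype.card (S.V N))).card

/-- A good ssee. -/
def Ssee.Good (S : Ssee) : Prop :=
  Tendsto (fun n => Fintype.card (S.V n)) atTop atTop ∧
  (∀ N, 1 < Fintype.card (S.V N) →
    Tendsto (fun n => ((S.emb N n).card : ℝ) / (Fintype.card (S.V n) : ℝ)) atTop atTop) ∧
  (∀ N, 1 < Fintype.card (S.V N) →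
    Tendsto (fun n => ((Fintype.card (S.V n) : ℝ) * (S.interCount N n : ℝ)) /
      ((S.emb N n).card : ℝ) ^ 2) atTop (nhds 0))


lemma count_small_sets (δ : ℝ) (hδ : 0 < δ) : ∃ τ : ℝ, 0 < τ ∧
    ∀ (W : Type) [Fintype W] [DecidableEq W] (M : ℝ), (Fintype.card W : ℝ) ≤ M →
      ((((Finset.univ : Finset (Finset W)).filter (fun T => (T.card : ℝ) ≤ τ * M)).card : ℕ) : ℝ)
        ≤ Real.exp (δ * M) := by
  obtain ⟨x, hx0, hx1, hxδ⟩ : ∃ x : ℝ, 0 < x ∧ x < 1 ∧ x ≤ δ / 2 :=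
    ⟨min (δ / 2) (1 / 2), by positivity, by
      have := min_le_right (δ / 2) (1 / 2 : ℝ); linarith, min_le_left _ _⟩
  have hL : Real.log x < 0 := Real.log_neg hx0 hx1
  refine ⟨δ / 2 / (-Real.log x), div_pos (by positivity) (by linarith), ?_⟩
  intro W _ _ M hM
  set τ := δ / 2 / (-Real.log x) with hτ
  have hτL : τ * Real.log x = - (δ / 2) := by
    have hne := hL.ne
    rw [hτ]; field_simp
  have hM0 : 0 ≤ M := le_trans (by positivity) hM
  set 𝒯 := (Finset.univ : Finset (Finset W)).filter (fun T => (T.card : ℝ) ≤ τ * M)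
  have h1 : (𝒯.card : ℝ) * Real.exp (-(δ / 2) * M) ≤ ∑ T ∈ 𝒯, x ^ T.card := by
    rw [← nsmul_eq_mul]
    apply Finset.card_nsmul_le_sum
    intro T hT
    have hT' : (T.card : ℝ) ≤ τ * M := (Finset.mem_filter.1 hT).2
    have : x ^ T.card = Real.exp (Real.log x * T.card) := by
      rw [← Real.rpow_natCast, Real.rpow_def_of_pos hx0]
    rw [this]
    apply Real.exp_le_exp.2
    nlinarith
  have h2 : ∑ T ∈ 𝒯, x ^ T.card ≤ (x + 1) ^ Fintype.card W := by
    have := Finset.sum_pow_mul_eq_add_pow x 1 (Finset.univ : Finset W)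
    rw [Finset.card_univ] at this
    rw [← this]
    simp only [one_pow, mul_one, Finset.powerset_univ]
    exact Finset.sum_le_sum_of_subset_of_nonneg (Finset.filter_subset _ _)
      (fun _ _ _ => by positivity)
  have h3 : (x + 1) ^ Fintype.card W ≤ Real.exp (δ / 2 * M) := by
    calc (x + 1) ^ Fintype.card W ≤ (Real.exp x) ^ Fintype.card W :=
          pow_le_pow_left₀ (by positivity) (Real.add_one_le_exp x) _
      _ = Real.exp (Fintype.card W * x) := by rw [Real.exp_nat_mul]
      _ ≤ _ := by
          apply Real.exp_le_exp.2
          have : (0:ℝ) ≤ Fintype.card W := by positivity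
          nlinarith
  have h4 := (h1.trans h2).trans h3
  have h5 : Real.exp (δ * M) = Real.exp (δ / 2 * M) * Real.exp (δ / 2 * M) := by
    rw [← Real.exp_add]; congr 1; ring
  have h6 : Real.exp (-(δ / 2) * M) * Real.exp (δ / 2 * M) = 1 := by
    rw [← Real.exp_add]; simp
  rw [h5]
  calc (𝒯.card : ℝ) = (𝒯.card : ℝ) * Real.exp (-(δ / 2) * M) * Real.exp (δ / 2 * M) := by
        rw [mul_assoc, h6, mul_one]
    _ ≤ _ := mul_le_mul_of_nonneg_right h4 (Real.exp_pos _).le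

/-- Admissibility of a pair (fingerprint, set of edges). -/
structure AdmPair {W E : Type} [DecidableEq W] {m : ℕ}
    (π : Fin (m + 2) → E → W) (μ : W → ℝ) (A : Finset E) (a b : ℝ)
    (T : Finset W) (G : Finset E) : Prop where
  sub : G ⊆ A
  fst : ∀ e ∈ G, π 0 e ∈ T
  deg : ∀ (i : Fin (m + 1)) (w : W), ((G.filter (fun e => π i.succ e = w)).card : ℝ) ≤ a * μ w
  big : b * ∑ v ∈ T, μ v ≤ (G.card : ℝ)

lemma card_eq_sum_deg {W E : Type} [Fintype W] [DecidableEq W] (p : E → W) (G : Finset E) :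
    (G.card : ℝ) = ∑ w, ((G.filter (fun e => p e = w)).card : ℝ) := by
  have := Finset.card_eq_sum_card_fiberwise (f := p) (s := G) (t := Finset.univ) (by simp)
  exact_mod_cast this

lemma card_filter_mem_eq_sum_deg {W E : Type} [DecidableEq W] (p : E → W) (G : Finset E)
    (S : Finset W) :
    ((G.filter (fun e => p e ∈ S)).card : ℝ) = ∑ w ∈ S, ((G.filter (fun e => p e = w)).card : ℝ) := by
  have := Finset.card_eq_sum_card_fiberwise (f := p) (s := G.filter (fun e => p e ∈ S)) (t := S)
    (by intro e he; simpa using (Finset.mem_filter.1 (Finset.mem_coe.1 he)).2)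
  rw [this]
  push_cast
  refine Finset.sum_congr rfl (fun w hw => ?_)
  congr 2
  ext e
  simp only [Finset.mem_filter]
  constructor
  · rintro ⟨⟨h1, _⟩, h2⟩; exact ⟨h1, h2⟩
  · rintro ⟨h1, h2⟩; exact ⟨⟨h1, h2 ▸ hw⟩, h2⟩

lemma big_of_saturated {W E : Type} [Fintype W] [DecidableEq W] [DecidableEq E] {m : ℕ}
    (π : Fin (m + 2) → E → W) (μ : W → ℝ) (hμ : ∀ w, 1 ≤ μ w) (A : Finset E)
    (Δ K γ θ τ : ℝ) (hΔ : 0 < Δ) (hγ : 0 < γ) (hθ : 0 < θ) (hτγ : τ ≤ γ / 8)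
    (hK : K ≤ θ * Δ / 2)
    (hdeg : ∀ i w, ((A.filter (fun e => π i e = w)).card : ℝ) ≤ Δ * μ w)
    (hco : ∀ i j, i ≠ j → ∀ v w,
      ((A.filter (fun e => π i e = v ∧ π j e = w)).card : ℝ) ≤ K)
    (hA : γ * Δ * ∑ w, μ w ≤ (A.card : ℝ))
    (T : Finset W) (G : Finset E)
    (hTG : AdmPair π μ A (θ * Δ) (γ / 4 * Δ) T G)
    (hTs : ∑ v ∈ T, μ v ≤ τ * ∑ w, μ w)
    (X : Finset W)
    (hX : ∀ v, v ∉ T → γ / 2 * Δ * μ v ≤ ((A.filter (fun e => π 0 e = v)).card : ℝ) →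
      (∃ G', AdmPair π μ A (θ * Δ) (γ / 4 * Δ) (insert v T) G') → v ∈ X)
    (hXs : ∑ v ∈ X, μ v < γ / 4 * ∑ w, μ w) :
    γ ^ 2 / (64 * (m + 1)) * (θ * Δ) * ∑ w, μ w ≤ (G.card : ℝ) := by
  classical
  set M := ∑ w, μ w with hM
  have hμ0 : ∀ w, 0 ≤ μ w := fun w => zero_le_one.trans (hμ w)
  set B := (Finset.univ : Finset W).filter
    (fun v => γ / 2 * Δ * μ v ≤ ((A.filter (fun e => π 0 e = v)).card : ℝ)) with hB
  -- measure of B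
  have hBμ : γ / 2 * M ≤ ∑ v ∈ B, μ v := by
    have h1 := card_eq_sum_deg (π 0) A
    have h2 : ∑ w, ((A.filter (fun e => π 0 e = w)).card : ℝ) ≤
        Δ * ∑ v ∈ B, μ v + γ / 2 * Δ * M := by
      rw [← Finset.sum_filter_add_sum_filter_not Finset.univ
        (fun v => γ / 2 * Δ * μ v ≤ ((A.filter (fun e => π 0 e = v)).card : ℝ))]
      apply add_le_add
      · rw [Finset.mul_sum]
        exact Finset.sum_le_sum (fun v _ => hdeg 0 v)
      · rw [hM, Finset.mul_sum]
        refine (Finset.sum_le_sum (g := fun v => γ / 2 * Δ * μ v) ?_).trans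
          (Finset.sum_le_sum_of_subset_of_nonneg (Finset.filter_subset _ _) ?_)
        · intro v hv
          exact (not_le.1 (Finset.mem_filter.1 hv).2).le
        · intro v _ _
          have := hμ0 v
          positivity
    have h3 : Δ * (γ / 2 * M) ≤ Δ * ∑ v ∈ B, μ v := by nlinarith
    exact le_of_mul_le_mul_left h3 hΔ
  set B' := (B \ T) \ X with hB'
  have hB'μ : γ / 8 * M ≤ ∑ v ∈ B', μ v := by
    have h1 : ∑ v ∈ B, μ v ≤ ∑ v ∈ B', μ v + ∑ v ∈ T, μ v + ∑ v ∈ X, μ v := by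
      have h : B ⊆ B' ∪ T ∪ X := by
        intro v hv
        simp only [hB', Finset.mem_union, Finset.mem_sdiff]
        tauto
      have hu : ∀ P Q : Finset W, ∑ v ∈ P ∪ Q, μ v ≤ ∑ v ∈ P, μ v + ∑ v ∈ Q, μ v := by
        intro P Q
        rw [← Finset.sum_union_inter]
        have : 0 ≤ ∑ v ∈ P ∩ Q, μ v := Finset.sum_nonneg (fun v _ => hμ0 v)
        linarith
      have h' : ∑ v ∈ B, μ v ≤ ∑ v ∈ B' ∪ T ∪ X, μ v :=
        Finset.sum_le_sum_of_subset_of_nonneg h (fun v _ _ => hμ0 v)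
      have := hu (B' ∪ T) X
      have := hu B' T
      linarith
    have hM0 : 0 ≤ M := Finset.sum_nonneg (fun v _ => hμ0 v)
    nlinarith
  -- saturated vertices
  let Sat : Fin (m + 1) → Finset W := fun i => Finset.univ.filter
    (fun w => θ * Δ * μ w < ((G.filter (fun e => π i.succ e = w)).card : ℝ) + K)
  have hkey : ∀ v ∈ B', γ / 4 * Δ * μ v ≤
      ((A.filter (fun e => π 0 e = v ∧ ∃ i : Fin (m + 1), π i.succ e ∈ Sat i)).card : ℝ) := by
    intro v hv
    simp only [hB', Finset.mem_sdiff] at hv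
    obtain ⟨⟨hvB, hvT⟩, hvX⟩ := hv
    have hvd := (Finset.mem_filter.1 hvB).2
    set L := A.filter (fun e => π 0 e = v ∧ ¬ ∃ i : Fin (m + 1), π i.succ e ∈ Sat i) with hL
    have hsplit : ((A.filter (fun e => π 0 e = v)).card : ℝ) =
        ((A.filter (fun e => π 0 e = v ∧ ∃ i : Fin (m + 1), π i.succ e ∈ Sat i)).card : ℝ) +
        (L.card : ℝ) := by
      rw [← Finset.card_filter_add_card_filter_not (s := A.filter (fun e => π 0 e = v))
        (fun e => ∃ i : Fin (m + 1), π i.succ e ∈ Sat i), Finset.filter_filter,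
        Finset.filter_filter]
      push_cast
      rfl
    by_contra hcon
    push Not at hcon
    have hLb : γ / 4 * Δ * μ v ≤ (L.card : ℝ) := by nlinarith
    apply hvX
    apply hX v hvT hvd
    have hdis : Disjoint G L := by
      rw [Finset.disjoint_left]
      intro e he he'
      have h1 := hTG.fst e he
      have h2 := (Finset.mem_filter.1 he').2.1
      exact hvT (h2 ▸ h1)
    refine ⟨G ∪ L, ?_, ?_, ?_, ?_⟩
    · exact Finset.union_subset hTG.sub (Finset.filter_subset _ _)
    · intro e he
      rcases Finset.mem_union.1 he with he | he
      · exact Finset.mem_insert_of_mem (hTG.fst e he)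
      · rw [(Finset.mem_filter.1 he).2.1]; exact Finset.mem_insert_self _ _
    · intro i w
      rw [Finset.filter_union]
      have hcu := Finset.card_union_le (G.filter (fun e => π i.succ e = w))
        (L.filter (fun e => π i.succ e = w))
      have hcu' : (((G.filter (fun e => π i.succ e = w)) ∪
        (L.filter (fun e => π i.succ e = w))).card : ℝ) ≤
          ((G.filter (fun e => π i.succ e = w)).card : ℝ) +
          ((L.filter (fun e => π i.succ e = w)).card : ℝ) := by exact_mod_cast hcu
      by_cases hw : w ∈ Sat i
      · have : L.filter (fun e => π i.succ e = w) = ∅ := by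
          rw [Finset.filter_eq_empty_iff]
          intro e he hew
          apply (Finset.mem_filter.1 he).2.2
          exact ⟨i, hew ▸ hw⟩
        rw [this, Finset.union_empty]
        exact hTG.deg i w
      · have h1 : ((G.filter (fun e => π i.succ e = w)).card : ℝ) + K ≤ θ * Δ * μ w := by
          by_contra h
          exact hw (Finset.mem_filter.2 ⟨Finset.mem_univ _, not_le.1 h⟩)
        have h2 : ((L.filter (fun e => π i.succ e = w)).card : ℝ) ≤ K := by
          refine le_trans ?_ (hco 0 i.succ (Fin.succ_ne_zero i).symm v w)
          have : L.filter (fun e => π i.succ e = w) ⊆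
              A.filter (fun e => π 0 e = v ∧ π i.succ e = w) := by
            intro e he
            simp only [hL, Finset.mem_filter] at he ⊢
            exact ⟨he.1.1, he.1.2.1, he.2⟩
          exact_mod_cast Finset.card_le_card this
        linarith
    · rw [Finset.card_union_of_disjoint hdis, Finset.sum_insert hvT]
      push_cast
      have := hTG.big
      nlinarith
  -- edges hitting saturated vertices
  have h1 : γ / 4 * Δ * ∑ v ∈ B', μ v ≤
      ((A.filter (fun e => ∃ i : Fin (m + 1), π i.succ e ∈ Sat i)).card : ℝ) := by
    rw [card_eq_sum_deg (π 0), Finset.mul_sum]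
    refine (Finset.sum_le_sum (fun v hv => hkey v hv)).trans ?_
    refine le_trans (le_of_eq ?_) (Finset.sum_le_sum_of_subset_of_nonneg (Finset.subset_univ B')
      (fun _ _ _ => by positivity))
    refine Finset.sum_congr rfl (fun v _ => ?_)
    rw [Finset.filter_filter]
    congr 2
    ext e
    simp only [Finset.mem_filter]
    tauto
  have h2 : ((A.filter (fun e => ∃ i : Fin (m + 1), π i.succ e ∈ Sat i)).card : ℝ) ≤
      ∑ i, Δ * ∑ w ∈ Sat i, μ w := by
    have hsub : A.filter (fun e => ∃ i : Fin (m + 1), π i.succ e ∈ Sat i) ⊆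
        Finset.univ.biUnion (fun i : Fin (m + 1) => A.filter (fun e => π i.succ e ∈ Sat i)) := by
      intro e he
      simp only [Finset.mem_filter, Finset.mem_biUnion, Finset.mem_univ, true_and] at he ⊢
      obtain ⟨h, i, hi⟩ := he
      exact ⟨i, h, hi⟩
    have h := (Finset.card_le_card hsub).trans Finset.card_biUnion_le
    have h' : ((A.filter (fun e => ∃ i : Fin (m + 1), π i.succ e ∈ Sat i)).card : ℝ) ≤
      ∑ i : Fin (m + 1), ((A.filter (fun e => π i.succ e ∈ Sat i)).card : ℝ) := by
      exact_mod_cast h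
    refine h'.trans (Finset.sum_le_sum (fun i _ => ?_))
    rw [card_filter_mem_eq_sum_deg, Finset.mul_sum]
    exact Finset.sum_le_sum (fun w _ => hdeg _ w)
  have h3 : ∀ i, θ * Δ / 2 * ∑ w ∈ Sat i, μ w ≤ (G.card : ℝ) := by
    intro i
    rw [card_eq_sum_deg (π i.succ) G, Finset.mul_sum]
    refine (Finset.sum_le_sum (g := fun w => ((G.filter (fun e => π i.succ e = w)).card : ℝ))
      ?_).trans (Finset.sum_le_sum_of_subset_of_nonneg (Finset.subset_univ _)
      (fun _ _ _ => by positivity))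
    intro w hw
    have h := (Finset.mem_filter.1 hw).2
    have hw1 := hμ w
    have : θ * Δ / 2 * 1 ≤ θ * Δ / 2 * μ w := by gcongr
    linarith
  have h4 : θ * Δ / 2 * ∑ i, ∑ w ∈ Sat i, μ w ≤ (m + 1) * (G.card : ℝ) := by
    rw [Finset.mul_sum]
    refine (Finset.sum_le_sum (fun i _ => h3 i)).trans ?_
    simp
  rw [← Finset.mul_sum] at h2
  have h5 : γ / 4 * (γ / 8 * M) ≤ ∑ i, ∑ w ∈ Sat i, μ w := by
    have : Δ * (γ / 4 * (γ / 8 * M)) ≤ Δ * ∑ i, ∑ w ∈ Sat i, μ w := by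
      refine le_trans ?_ (h1.trans h2)
      have : γ / 4 * Δ * (γ / 8 * M) ≤ γ / 4 * Δ * ∑ v ∈ B', μ v := by gcongr
      linarith
    exact le_of_mul_le_mul_left this hΔ
  have h6 : θ * Δ / 2 * (γ / 4 * (γ / 8 * M)) ≤ (m + 1) * (G.card : ℝ) :=
    le_trans (by gcongr) h4
  have h7 : γ ^ 2 / (64 * (m + 1)) * (θ * Δ) * M =
      (θ * Δ / 2 * (γ / 4 * (γ / 8 * M))) / (m + 1) := by
    field_simp
    ring
  rw [h7, div_le_iff₀ (by positivity)]
  linarith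

lemma container_step (m : ℕ) : ∀ γ : ℝ, 0 < γ → ∃ c : ℝ, 0 < c ∧ ∀ δ : ℝ, 0 < δ →
    ∃ κ : ℝ, 0 < κ ∧ ∀ (W E : Type) [Fintype W] [DecidableEq W] [DecidableEq E]
      (π : Fin (m + 1) → E → W) (μ : W → ℝ) (A : Finset E) (Δ K : ℝ),
      (∀ w, 1 ≤ μ w) → 0 < Δ → K ≤ κ * Δ →
      (∀ i w, ((A.filter (fun e => π i e = w)).card : ℝ) ≤ Δ * μ w) →
      (∀ i j, i ≠ j → ∀ v w,
        ((A.filter (fun e => π i e = v ∧ π j e = w)).card : ℝ) ≤ K) →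
      γ * Δ * ∑ w, μ w ≤ (A.card : ℝ) →
      ∃ R : Finset (Finset W), (R.card : ℝ) ≤ Real.exp (δ * ∑ w, μ w) ∧
        (∀ X ∈ R, (∀ w ∈ X, ∃ e ∈ A, ∃ i, π i e = w) ∧ c * ∑ w, μ w ≤ ∑ w ∈ X, μ w) ∧
        ∀ I : Finset W, (∀ e ∈ A, ∃ i, π i e ∉ I) → ∃ X ∈ R, Disjoint I X := by
  induction m with
  | zero =>
    intro γ hγ
    refine ⟨γ, hγ, fun δ hδ => ⟨1, one_pos, ?_⟩⟩
    intro W E _ _ _ π μ A Δ K hμ hΔ hK hdeg hco hA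
    have hM0 : 0 ≤ ∑ w, μ w := Finset.sum_nonneg (fun v _ => zero_le_one.trans (hμ v))
    refine ⟨{A.image (π 0)}, ?_, ?_, ?_⟩
    · simp only [Finset.card_singleton, Nat.cast_one]
      exact Real.one_le_exp (by positivity)
    · intro X hX
      rw [Finset.mem_singleton] at hX
      subst hX
      constructor
      · intro w hw
        obtain ⟨e, he, rfl⟩ := Finset.mem_image.1 hw
        exact ⟨e, he, 0, rfl⟩
      · have h1 : A.filter (fun e => π 0 e ∈ A.image (π 0)) = A :=
          Finset.filter_true_of_mem (fun e he => Finset.mem_image_of_mem _ he)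
        have h2 := card_filter_mem_eq_sum_deg (π 0) A (A.image (π 0))
        rw [h1] at h2
        have h3 : (A.card : ℝ) ≤ Δ * ∑ w ∈ A.image (π 0), μ w := by
          rw [h2, Finset.mul_sum]
          exact Finset.sum_le_sum (fun w _ => hdeg 0 w)
        have h4 : Δ * (γ * ∑ w, μ w) ≤ Δ * ∑ w ∈ A.image (π 0), μ w := by nlinarith
        exact le_of_mul_le_mul_left h4 hΔ
    · intro I hI
      refine ⟨_, Finset.mem_singleton_self _, ?_⟩
      rw [Finset.disjoint_right]
      intro w hw
      obtain ⟨e, he, rfl⟩ := Finset.mem_image.1 hw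
      obtain ⟨i, hi⟩ := hI e he
      have hi0 : i = 0 := Fin.ext (by omega)
      rwa [hi0] at hi
  | succ m ih =>
    intro γ hγ
    obtain ⟨c', hc', ih⟩ := ih (γ ^ 2 / (64 * (m + 1))) (by positivity)
    refine ⟨min c' (γ / 4), by positivity, ?_⟩
    intro δ hδ
    obtain ⟨κ', hκ', ih⟩ := ih (δ / 2) (by positivity)
    obtain ⟨τ₀, hτ₀, hcount⟩ := count_small_sets (δ / 2) (by positivity)
    obtain ⟨τ, hτ, hττ₀, hτγ⟩ : ∃ τ : ℝ, 0 < τ ∧ τ ≤ τ₀ ∧ τ ≤ γ / 8 :=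
      ⟨min τ₀ (γ / 8), by positivity, min_le_left _ _, min_le_right _ _⟩
    set θ := τ * γ / 4 with hθdef
    have hθ : 0 < θ := by positivity
    refine ⟨min (θ * κ') (θ / 2), by positivity, ?_⟩
    intro W E _ _ _ π μ A Δ K hμ hΔ hK hdeg hco hA
    classical
    set M := ∑ w, μ w with hM
    have hμ0 : ∀ w, 0 ≤ μ w := fun w => zero_le_one.trans (hμ w)
    have hM0 : 0 ≤ M := Finset.sum_nonneg (fun v _ => hμ0 v)
    have hcardM : ∀ T : Finset W, (T.card : ℝ) ≤ ∑ w ∈ T, μ w := by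
      intro T
      have := Finset.card_nsmul_le_sum T μ 1 (fun w _ => hμ w)
      simpa using this
    have hK1 : K ≤ κ' * (θ * Δ) := by
      have : min (θ * κ') (θ / 2) * Δ ≤ θ * κ' * Δ := by gcongr; exact min_le_left _ _
      linarith
    have hK2 : K ≤ θ * Δ / 2 := by
      have : min (θ * κ') (θ / 2) * Δ ≤ θ / 2 * Δ := by gcongr; exact min_le_right _ _
      linarith
    let Adm : Finset W → Prop := fun T => ∃ G, AdmPair π μ A (θ * Δ) (γ / 4 * Δ) T G
    -- size of admissible sets
    have hsize : ∀ T G, AdmPair π μ A (θ * Δ) (γ / 4 * Δ) T G → ∑ v ∈ T, μ v ≤ τ * M := by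
      intro T G h
      have h1 : (G.card : ℝ) ≤ θ * Δ * M := by
        rw [card_eq_sum_deg (π (Fin.succ 0)) G, hM, Finset.mul_sum]
        exact Finset.sum_le_sum (fun w _ => h.deg 0 w)
      have h2 := h.big.trans h1
      have h3 : (γ / 4 * Δ) * ∑ v ∈ T, μ v ≤ (γ / 4 * Δ) * (τ * M) := by
        refine h2.trans (le_of_eq ?_)
        rw [hθdef]; ring
      exact le_of_mul_le_mul_left h3 (by positivity)
    let X : Finset W → Finset W := fun T => Finset.univ.filter (fun v => v ∉ T ∧
      γ / 2 * Δ * μ v ≤ ((A.filter (fun e => π 0 e = v)).card : ℝ) ∧ Adm (insert v T))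
    -- family attached to an admissible set
    have hfam : ∀ T : Finset W, ∃ R : Finset (Finset W), Adm T →
        (R.card : ℝ) ≤ Real.exp (δ / 2 * M) ∧
        (∀ Y ∈ R, (∀ w ∈ Y, ∃ e ∈ A, ∃ i, π i e = w) ∧
          min c' (γ / 4) * M ≤ ∑ w ∈ Y, μ w) ∧
        ∀ I : Finset W, T ⊆ I → Disjoint I (X T) → (∀ e ∈ A, ∃ i, π i e ∉ I) →
          ∃ Y ∈ R, Disjoint I Y := by
      intro T
      by_cases hT : Adm T
      swap
      · exact ⟨∅, fun h => absurd h hT⟩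
      by_cases hXT : γ / 4 * M ≤ ∑ v ∈ X T, μ v
      · by_cases hM1 : M = 0
        · -- no vertices
          refine ⟨{∅}, fun _ => ⟨?_, ?_, ?_⟩⟩
          · simp only [Finset.card_singleton, Nat.cast_one]
            exact Real.one_le_exp (by positivity)
          · intro Y hY
            rw [Finset.mem_singleton] at hY
            subst hY
            simp [hM1]
          · intro I _ _ _
            exact ⟨∅, by simp, by simp⟩
        have hMpos : 0 < M := lt_of_le_of_ne hM0 (Ne.symm hM1)
        refine ⟨{X T}, fun _ => ⟨?_, ?_, ?_⟩⟩
        · simp only [Finset.card_singleton, Nat.cast_one]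
          exact Real.one_le_exp (by positivity)
        · intro Y hY
          rw [Finset.mem_singleton] at hY
          subst hY
          constructor
          · intro w hw
            have h := (Finset.mem_filter.1 hw).2.2.1
            have hw1 := hμ w
            have hpos : (0:ℝ) < ((A.filter (fun e => π 0 e = w)).card : ℝ) :=
              lt_of_lt_of_le (by positivity) h
            have hpos' : 0 < (A.filter (fun e => π 0 e = w)).card := by exact_mod_cast hpos
            obtain ⟨e, he⟩ := Finset.card_pos.1 hpos'
            exact ⟨e, (Finset.mem_filter.1 he).1, 0, (Finset.mem_filter.1 he).2⟩
          · refine le_trans ?_ hXT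
            gcongr
            exact min_le_right _ _
        · intro I _ hd _
          exact ⟨X T, Finset.mem_singleton_self _, hd⟩
      · obtain ⟨G, hG⟩ := hT
        have hbig := big_of_saturated π μ hμ A Δ K γ θ τ hΔ hγ hθ hτγ hK2 hdeg hco hA T G hG
          (hsize T G hG) (X T)
          (fun v h1 h2 h3 => Finset.mem_filter.2 ⟨Finset.mem_univ _, h1, h2, h3⟩)
          (not_le.1 hXT)
        obtain ⟨R, hR1, hR2, hR3⟩ := ih W E (fun i e => π i.succ e) μ G (θ * Δ) K hμ
          (by positivity) hK1 hG.deg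
          (by
            intro i j hij v w
            refine le_trans ?_ (hco i.succ j.succ (fun h => hij (Fin.succ_injective _ h)) v w)
            have := Finset.card_le_card (Finset.filter_subset_filter
              (fun e => π i.succ e = v ∧ π j.succ e = w) hG.sub)
            exact_mod_cast this)
          hbig
        refine ⟨R, fun _ => ⟨hR1, ?_, ?_⟩⟩
        · intro Y hY
          obtain ⟨h1, h2⟩ := hR2 Y hY
          constructor
          · intro w hw
            obtain ⟨e, he, i, hi⟩ := h1 w hw
            exact ⟨e, hG.sub he, i.succ, hi⟩
          · refine le_trans ?_ h2
            gcongr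
            exact min_le_left _ _
        · intro I hTI _ hI
          apply hR3 I
          intro e he
          obtain ⟨i, hi⟩ := hI e (hG.sub he)
          have hi0 : i ≠ 0 := by
            rintro rfl
            exact hi (hTI (hG.fst e he))
          obtain ⟨j, rfl⟩ := Fin.exists_succ_eq.2 hi0
          exact ⟨j, hi⟩
    choose R hR using hfam
    set 𝒯 := (Finset.univ : Finset (Finset W)).filter
      (fun T => (T.card : ℝ) ≤ τ₀ * M) with h𝒯
    set 𝒯' := 𝒯.filter Adm with h𝒯'
    refine ⟨𝒯'.biUnion R, ?_, ?_, ?_⟩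
    · have hc1 : (𝒯.card : ℝ) ≤ Real.exp (δ / 2 * M) := by
        apply hcount W M
        have := hcardM Finset.univ
        rwa [Finset.card_univ] at this
      have hc2 : (𝒯'.card : ℝ) ≤ Real.exp (δ / 2 * M) := by
        refine le_trans ?_ hc1
        exact_mod_cast Finset.card_le_card (Finset.filter_subset _ _)
      have hc3 : ((𝒯'.biUnion R).card : ℝ) ≤ ∑ T ∈ 𝒯', ((R T).card : ℝ) := by
        exact_mod_cast Finset.card_biUnion_le
      have hc4 : ∑ T ∈ 𝒯', ((R T).card : ℝ) ≤ 𝒯'.card • Real.exp (δ / 2 * M) := by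
        apply Finset.sum_le_card_nsmul
        intro T hT
        exact (hR T (Finset.mem_filter.1 hT).2).1
      rw [nsmul_eq_mul] at hc4
      have h5 : Real.exp (δ * M) = Real.exp (δ / 2 * M) * Real.exp (δ / 2 * M) := by
        rw [← Real.exp_add]; congr 1; ring
      rw [h5]
      refine (hc3.trans hc4).trans ?_
      gcongr
    · intro Y hY
      obtain ⟨T, hT, hYT⟩ := Finset.mem_biUnion.1 hY
      exact (hR T (Finset.mem_filter.1 hT).2).2.1 Y hYT
    · intro I hI
      have h0 : Adm ∅ := ⟨∅, by simp, by simp, by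
        intro i w
        have := hμ0 w
        simp only [Finset.filter_empty, Finset.card_empty, Nat.cast_zero]
        positivity, by simp⟩
      have hne : (I.powerset.filter Adm).Nonempty := ⟨∅, by simp [h0]⟩
      obtain ⟨T, hT, hmax⟩ := Finset.exists_max_image _ Finset.card hne
      simp only [Finset.mem_filter, Finset.mem_powerset] at hT hmax
      have hTs : T ∈ 𝒯' := by
        simp only [h𝒯', h𝒯, Finset.mem_filter, Finset.mem_univ, true_and]
        refine ⟨?_, hT.2⟩
        obtain ⟨G, hG⟩ := hT.2
        have h1 := hsize T G hG
        have h2 := hcardM T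
        have h3 : τ * M ≤ τ₀ * M := by gcongr
        linarith
      have hdis : Disjoint I (X T) := by
        rw [Finset.disjoint_left]
        intro v hvI hvX
        obtain ⟨_, hvT, _, hadm⟩ := Finset.mem_filter.1 hvX
        have := hmax (insert v T) ⟨Finset.insert_subset hvI hT.1, hadm⟩
        rw [Finset.card_insert_of_notMem hvT] at this
        omega
      obtain ⟨Y, hY, hd⟩ := (hR T hT.2).2.2 I hT.1 hdis hI
      exact ⟨Y, Finset.mem_biUnion.2 ⟨T, hTs, hY⟩, hd⟩

lemma container_lemma (m : ℕ) (γ : ℝ) (hγ : 0 < γ) (δ : ℝ) (hδ : 0 < δ) :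
    ∃ κ : ℝ, 0 < κ ∧ ∀ (W E : Type) [Fintype W] [DecidableEq W] [DecidableEq E]
      (π : Fin (m + 1) → E → W) (μ : W → ℝ) (A : Finset E) (Δ K : ℝ),
      (∀ w, 1 ≤ μ w) → 0 < Δ → K ≤ κ * Δ →
      (∀ i w, ((A.filter (fun e => π i e = w)).card : ℝ) ≤ Δ * μ w) →
      (∀ i j, i ≠ j → ∀ v w,
        ((A.filter (fun e => π i e = v ∧ π j e = w)).card : ℝ) ≤ K) →
      ∃ 𝒞 : Finset (Finset W), (𝒞.card : ℝ) ≤ Real.exp (δ * ∑ w, μ w) ∧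
        (∀ C ∈ 𝒞, ((A.filter (fun e => ∀ i, π i e ∈ C)).card : ℝ) ≤ γ * Δ * ∑ w, μ w) ∧
        ∀ I : Finset W, (∀ e ∈ A, ∃ i, π i e ∉ I) → ∃ C ∈ 𝒞, I ⊆ C := by
  obtain ⟨c, hc, hstep⟩ := container_step m γ hγ
  obtain ⟨s, hs⟩ := exists_nat_gt (1 / c)
  have hs0 : (0:ℝ) < s := lt_trans (by positivity) hs
  obtain ⟨κ, hκ, hstep⟩ := hstep (δ / s) (by positivity)
  refine ⟨κ, hκ, ?_⟩
  intro W E _ _ _ π μ A Δ K hμ hΔ hK hdeg hco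
  classical
  set M := ∑ w, μ w with hM
  have hμ0 : ∀ w, 0 ≤ μ w := fun w => zero_le_one.trans (hμ w)
  have hM0 : 0 ≤ M := Finset.sum_nonneg (fun v _ => hμ0 v)
  have main : ∀ (j : ℕ) (C0 : Finset W), ∑ w ∈ C0, μ w ≤ j * (c * M) →
      ∃ 𝒞 : Finset (Finset W), (𝒞.card : ℝ) ≤ Real.exp (j * (δ / s * M)) ∧
        (∀ C ∈ 𝒞, ((A.filter (fun e => ∀ i, π i e ∈ C)).card : ℝ) ≤ γ * Δ * M) ∧
        ∀ I : Finset W, I ⊆ C0 → (∀ e ∈ A, ∃ i, π i e ∉ I) → ∃ C ∈ 𝒞, I ⊆ C := by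
    intro j
    induction j with
    | zero =>
      intro C0 hC0
      have hempty : C0 = ∅ := by
        by_contra h
        obtain ⟨w, hw⟩ := Finset.nonempty_iff_ne_empty.2 h
        have h1 := Finset.single_le_sum (f := μ) (fun v _ => hμ0 v) hw
        have h2 := hμ w
        simp only [Nat.cast_zero, zero_mul] at hC0
        linarith
      subst hempty
      refine ⟨{∅}, by simp, ?_, ?_⟩
      · intro C hC
        rw [Finset.mem_singleton] at hC
        subst hC
        have : A.filter (fun e => ∀ i, π i e ∈ (∅ : Finset W)) = ∅ := by
          rw [Finset.filter_eq_empty_iff]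
          intro e _ h
          exact absurd (h 0) (Finset.notMem_empty _)
        rw [this]
        simp only [Finset.card_empty, Nat.cast_zero]
        positivity
      · intro I hI _
        exact ⟨∅, by simp, hI⟩
    | succ j ihj =>
      intro C0 hC0
      by_cases hsm : ((A.filter (fun e => ∀ i, π i e ∈ C0)).card : ℝ) ≤ γ * Δ * M
      · refine ⟨{C0}, ?_, ?_, ?_⟩
        · simp only [Finset.card_singleton, Nat.cast_one]
          exact Real.one_le_exp (by positivity)
        · intro C hC
          rw [Finset.mem_singleton] at hC
          subst hC
          exact hsm
        · intro I hI _
          exact ⟨C0, by simp, hI⟩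
      · set A0 := A.filter (fun e => ∀ i, π i e ∈ C0) with hA0
        have hA0A : A0 ⊆ A := Finset.filter_subset _ _
        obtain ⟨R, hR1, hR2, hR3⟩ := hstep W E π μ A0 Δ K hμ hΔ hK
          (by
            intro i w
            refine le_trans ?_ (hdeg i w)
            exact_mod_cast Finset.card_le_card (Finset.filter_subset_filter _ hA0A))
          (by
            intro i j hij v w
            refine le_trans ?_ (hco i j hij v w)
            exact_mod_cast Finset.card_le_card (Finset.filter_subset_filter _ hA0A))
          (not_le.1 hsm).le
        have hsub : ∀ X ∈ R, X ⊆ C0 := by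
          intro X hX w hw
          obtain ⟨e, he, i, rfl⟩ := (hR2 X hX).1 w hw
          exact (Finset.mem_filter.1 he).2 i
        have hnext : ∀ X : Finset W, ∃ 𝒞 : Finset (Finset W), X ∈ R →
            (𝒞.card : ℝ) ≤ Real.exp (j * (δ / s * M)) ∧
            (∀ C ∈ 𝒞, ((A.filter (fun e => ∀ i, π i e ∈ C)).card : ℝ) ≤ γ * Δ * M) ∧
            ∀ I : Finset W, I ⊆ C0 \ X → (∀ e ∈ A, ∃ i, π i e ∉ I) → ∃ C ∈ 𝒞, I ⊆ C := by
          intro X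
          by_cases hX : X ∈ R
          · obtain ⟨𝒞, h𝒞⟩ := ihj (C0 \ X) (by
              have h1 := Finset.sum_sdiff (f := μ) (hsub X hX)
              have h2 := (hR2 X hX).2
              push_cast at hC0
              linarith)
            exact ⟨𝒞, fun _ => h𝒞⟩
          · exact ⟨∅, fun h => absurd h hX⟩
        choose 𝒞 h𝒞 using hnext
        refine ⟨R.biUnion 𝒞, ?_, ?_, ?_⟩
        · have hc3 : ((R.biUnion 𝒞).card : ℝ) ≤ ∑ X ∈ R, ((𝒞 X).card : ℝ) := by
            exact_mod_cast Finset.card_biUnion_le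
          have hc4 : ∑ X ∈ R, ((𝒞 X).card : ℝ) ≤ R.card • Real.exp (j * (δ / s * M)) := by
            apply Finset.sum_le_card_nsmul
            intro X hX
            exact (h𝒞 X hX).1
          rw [nsmul_eq_mul] at hc4
          have h5 : Real.exp ((j + 1 : ℕ) * (δ / s * M)) =
              Real.exp (δ / s * M) * Real.exp (j * (δ / s * M)) := by
            rw [← Real.exp_add]; congr 1; push_cast; ring
          rw [h5]
          refine (hc3.trans hc4).trans ?_
          gcongr
        · intro C hC
          obtain ⟨X, hX, hCX⟩ := Finset.mem_biUnion.1 hC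
          exact (h𝒞 X hX).2.1 C hCX
        · intro I hI hind
          obtain ⟨X, hX, hd⟩ := hR3 I (fun e he => hind e (hA0A he))
          have hIX : I ⊆ C0 \ X := by
            intro w hw
            exact Finset.mem_sdiff.2 ⟨hI hw, Finset.disjoint_left.1 hd hw⟩
          obtain ⟨C, hC, hIC⟩ := (h𝒞 X hX).2.2 I hIX hind
          exact ⟨C, Finset.mem_biUnion.2 ⟨X, hX, hC⟩, hIC⟩
  obtain ⟨𝒞, h1, h2, h3⟩ := main s Finset.univ (by
    rw [← hM]
    have : 1 ≤ s * c := by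
      rw [div_lt_iff₀ hc] at hs
      exact hs.le
    nlinarith)
  refine ⟨𝒞, ?_, h2, fun I hI => h3 I (Finset.subset_univ _) hI⟩
  refine h1.trans (le_of_eq ?_)
  congr 1
  field_simp

/-- Embeddings whose image meets the image of `φ` in at least two elements. -/
def Ssee.conflict (S : Ssee) (N n : ℕ) (φ : S.V N → S.V n) : Finset (S.V N → S.V n) :=
  (S.emb N n).filter (fun ψ =>
    1 < ((Finset.univ.image φ) ∩ (Finset.univ.image ψ)).card)

lemma Ssee.sum_conflict_le (S : Ssee) (N n : ℕ) (hN : N ≤ n) :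
    ∑ φ ∈ S.emb N n, (S.conflict N n φ).card ≤ S.interCount N n +
      (S.emb N n).card * Fintype.card (S.V N) ^ Fintype.card (S.V N) := by
  have h1 : ∑ φ ∈ S.emb N n, (S.conflict N n φ).card =
      ((S.emb N n ×ˢ S.emb N n).filter (fun p =>
        1 < ((Finset.univ.image p.1) ∩ (Finset.univ.image p.2)).card)).card := by
    simp only [Ssee.conflict, Finset.card_filter, Finset.sum_product]
  rw [h1]
  have hsub : (S.emb N n ×ˢ S.emb N n).filter (fun p =>
        1 < ((Finset.univ.image p.1) ∩ (Finset.univ.image p.2)).card) ⊆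
      (S.emb N n ×ˢ S.emb N n).filter (fun p =>
        1 < ((Finset.univ.image p.1) ∩ (Finset.univ.image p.2)).card ∧
        ((Finset.univ.image p.1) ∩ (Finset.univ.image p.2)).card < Fintype.card (S.V N)) ∪
      (S.emb N n ×ˢ S.emb N n).filter (fun p => ∀ v, p.2 v ∈ Finset.univ.image p.1) := by
    intro p hp
    simp only [Finset.mem_filter, Finset.mem_union] at hp ⊢
    by_cases h : ((Finset.univ.image p.1) ∩ (Finset.univ.image p.2)).card < Fintype.card (S.V N)
    · exact Or.inl ⟨hp.1, hp.2, h⟩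
    · right
      refine ⟨hp.1, fun v => ?_⟩
      have hc : (Finset.univ.image p.2).card ≤ Fintype.card (S.V N) := by
        simpa using Finset.card_image_le (s := (Finset.univ : Finset (S.V N))) (f := p.2)
      have heq : (Finset.univ.image p.1) ∩ (Finset.univ.image p.2) = Finset.univ.image p.2 :=
        Finset.eq_of_subset_of_card_le Finset.inter_subset_right (hc.trans (not_lt.1 h))
      have hv : p.2 v ∈ (Finset.univ.image p.1) ∩ (Finset.univ.image p.2) := by
        rw [heq]; exact Finset.mem_image_of_mem _ (Finset.mem_univ _)
      exact (Finset.mem_inter.1 hv).1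
  refine (Finset.card_le_card hsub).trans ((Finset.card_union_le _ _).trans ?_)
  refine Nat.add_le_add (le_of_eq rfl) ?_
  have h2 : ((S.emb N n ×ˢ S.emb N n).filter
      (fun p => ∀ v, p.2 v ∈ Finset.univ.image p.1)).card =
      ∑ φ ∈ S.emb N n, ((S.emb N n).filter (fun ψ => ∀ v, ψ v ∈ Finset.univ.image φ)).card := by
    simp only [Finset.card_filter, Finset.sum_product]
  rw [h2, ← smul_eq_mul]
  apply Finset.sum_le_card_nsmul
  intro φ hφ
  have hsub2 : (S.emb N n).filter (fun ψ => ∀ v, ψ v ∈ Finset.univ.image φ) ⊆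
      Fintype.piFinset (fun _ : S.V N => Finset.univ.image φ) := by
    intro ψ hψ
    rw [Fintype.mem_piFinset]
    exact (Finset.mem_filter.1 hψ).2
  refine (Finset.card_le_card hsub2).trans ?_
  rw [Fintype.card_piFinset, Finset.prod_const, Finset.card_univ]
  refine Nat.pow_le_pow_left ?_ _
  simpa using Finset.card_image_le (s := (Finset.univ : Finset (S.V N))) (f := φ)

lemma Ssee.container_single (S : Ssee) (k N : ℕ) (F : Finset (S.V N → Fin k)) (hk : 1 ≤ k)
    (hN : Fintype.card (S.V N) = 1) (ε : ℝ) (hε : 0 < ε) (n : ℕ) :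
    ∃ T : Finset (S.V n → Finset (Fin k)),
      (∀ t ∈ T, ∀ x, (t x).Nonempty) ∧
      (∀ c : S.V n → Fin k, (∀ φ ∈ S.emb N n, (fun v => c (φ v)) ∉ F) →
        ∃ t ∈ T, ∀ x, c x ∈ t x) ∧
      (∀ t ∈ T,
        ((((S.emb N n) ×ˢ F).filter (fun p => ∀ v, p.2 v ∈ t (p.1 v))).card : ℝ) ≤
          ε * ((S.emb N n).card : ℝ)) ∧
      ((T.card : ℝ) ≤ (k : ℝ) ^ (ε * (Fintype.card (S.V n) : ℝ))) := by
  classical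
  have hsub : Subsingleton (S.V N) := Fintype.card_le_one_iff_subsingleton.1 hN.le
  let t0 : S.V n → Finset (Fin k) := fun x => Finset.univ.filter
    (fun a => ∀ φ ∈ S.emb N n, ∀ v, φ v = x → (fun _ => a) ∉ F)
  refine ⟨({t0} : Finset _).filter (fun t => ∀ x, (t x).Nonempty), ?_, ?_, ?_, ?_⟩
  · intro t ht
    exact (Finset.mem_filter.1 ht).2
  · intro c hc
    have hmem : ∀ x, c x ∈ t0 x := by
      intro x
      refine Finset.mem_filter.2 ⟨Finset.mem_univ _, ?_⟩
      intro φ hφ v hv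
      have h : (fun w => c (φ w)) = fun _ => c x := by
        funext w
        rw [Subsingleton.elim w v, hv]
      rw [← h]
      exact hc φ hφ
    exact ⟨t0, Finset.mem_filter.2 ⟨Finset.mem_singleton_self _, fun x => ⟨_, hmem x⟩⟩, hmem⟩
  · intro t ht
    have ht0 : t = t0 := Finset.mem_singleton.1 (Finset.mem_filter.1 ht).1
    subst ht0
    have : ((S.emb N n) ×ˢ F).filter (fun p => ∀ v, p.2 v ∈ t0 (p.1 v)) = ∅ := by
      rw [Finset.filter_eq_empty_iff]
      rintro ⟨φ, c⟩ hp h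
      obtain ⟨hφ, hcF⟩ := Finset.mem_product.1 hp
      let v : S.V N := Classical.arbitrary _
      have h1 := (Finset.mem_filter.1 (h v)).2 φ hφ v rfl
      apply h1
      have h2 : (fun _ => c v) = c := by
        funext w
        rw [Subsingleton.elim w v]
      simpa only [h2] using hcF
    rw [this]
    simp only [Finset.card_empty, Nat.cast_zero]
    positivity
  · have h1 : ((({t0} : Finset _).filter (fun t => ∀ x, (t x).Nonempty)).card : ℝ) ≤ 1 := by
      have := Finset.card_filter_le ({t0} : Finset (S.V n → Finset (Fin k)))
        (fun t => ∀ x, (t x).Nonempty)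
      rw [Finset.card_singleton] at this
      exact_mod_cast this
    refine h1.trans (Real.one_le_rpow (by exact_mod_cast hk) (by positivity))

lemma Ssee.container_main (S : Ssee) (hS : S.Good) (k N : ℕ)
    (F : Finset (S.V N → Fin k)) (hF : F.Nonempty) (hk : 2 ≤ k) (m : ℕ)
    (hm : Fintype.card (S.V N) = m + 2) (ε : ℝ) (hε : 0 < ε) :
    ∃ n₀ : ℕ, ∀ n ≥ n₀, ∃ T : Finset (S.V n → Finset (Fin k)),
      (∀ t ∈ T, ∀ x, (t x).Nonempty) ∧
      (∀ c : S.V n → Fin k, (∀ φ ∈ S.emb N n, (fun v => c (φ v)) ∉ F) →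
        ∃ t ∈ T, ∀ x, c x ∈ t x) ∧
      (∀ t ∈ T,
        ((((S.emb N n) ×ˢ F).filter (fun p => ∀ v, p.2 v ∈ t (p.1 v))).card : ℝ) ≤
          ε * ((S.emb N n).card : ℝ)) ∧
      ((T.card : ℝ) ≤ (k : ℝ) ^ (ε * (Fintype.card (S.V n) : ℝ))) := by
  classical
  obtain ⟨_, hS2, hS3⟩ := hS
  have hN1 : 1 < Fintype.card (S.V N) := by omega
  replace hS2 := hS2 N hN1
  replace hS3 := hS3 N hN1
  let g : Fin (m + 1 + 1) ≃ S.V N := (Fintype.equivFinOfCardEq hm).symm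
  have hF0 : (0 : ℝ) < (F.card : ℝ) := by exact_mod_cast hF.card_pos
  set L : ℝ := (k : ℝ) + (m + 2) * F.card with hL
  have hL0 : 0 < L := by positivity
  have hlog2 : 0 < Real.log 2 := Real.log_pos (by norm_num)
  obtain ⟨κ, hκ, hcont⟩ := container_lemma (m + 1) (ε / (2 * L)) (by positivity)
    (ε * Real.log 2 / L) (by positivity)
  set r : ℝ := ((m + 2 : ℕ) : ℝ) ^ (m + 2) with hr
  have hr0 : 0 < r := by positivity
  set η : ℝ := κ * ε / (2 * F.card ^ 2) with hη
  have hη0 : 0 < η := by positivity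
  have ev1 := hS2.eventually_ge_atTop (max 1 (2 * r / η))
  have ev2 := hS3.eventually_lt_const (show (0:ℝ) < η / 2 by positivity)
  obtain ⟨n₀, hn₀⟩ := eventually_atTop.1 (ev1.and ev2)
  refine ⟨max n₀ N, fun n hn => ?_⟩
  have hNn : N ≤ n := le_trans (le_max_right _ _) hn
  obtain ⟨hd, hI⟩ : max 1 (2 * r / η) ≤ ((S.emb N n).card : ℝ) / (Fintype.card (S.V n) : ℝ) ∧
      ((Fintype.card (S.V n) : ℝ) * (S.interCount N n : ℝ)) / ((S.emb N n).card : ℝ) ^ 2 < η / 2 :=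
    hn₀ n (le_trans (le_max_left _ _) hn)
  have hinj := S.emb_inj N n hNn
  obtain ⟨e, he⟩ : ∃ e : ℝ, e = ((S.emb N n).card : ℝ) := ⟨_, rfl⟩
  obtain ⟨ν, hν⟩ : ∃ ν : ℝ, ν = (Fintype.card (S.V n) : ℝ) := ⟨_, rfl⟩
  rw [← he, ← hν] at hd hI ⊢
  have hν0 : 0 < ν := by
    have : 0 < Fintype.card (S.V n) := Fintype.card_pos
    rw [hν]; exact_mod_cast this
  obtain ⟨d, hdd⟩ : ∃ d : ℝ, d = e / ν := ⟨_, rfl⟩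
  rw [← hdd] at hd
  have hd1 : 1 ≤ d := le_trans (le_max_left _ _) hd
  have hd2 : 2 * r / η ≤ d := le_trans (le_max_right _ _) hd
  have hd0 : 0 < d := by linarith
  have hedν : e = d * ν := by rw [hdd, div_mul_cancel₀ _ hν0.ne']
  clear hdd
  have he0 : 0 < e := by rw [hedν]; positivity
  -- threshold for conflicts
  obtain ⟨K, hKdef⟩ : ∃ K : ℝ, K = κ * d / F.card := ⟨_, rfl⟩
  have hK0 : 0 < K := by rw [hKdef]; positivity
  let Good : Finset (S.V N → S.V n) :=
    (S.emb N n).filter (fun φ => ((S.conflict N n φ).card : ℝ) ≤ K)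
  let Bad : Finset (S.V N → S.V n) :=
    (S.emb N n).filter (fun φ => ¬ ((S.conflict N n φ).card : ℝ) ≤ K)
  have hbad : (Bad.card : ℝ) * F.card ≤ ε / 2 * e := by
    have h1 : (Bad.card : ℝ) * K ≤ ∑ φ ∈ Bad, ((S.conflict N n φ).card : ℝ) := by
      rw [← nsmul_eq_mul]
      apply Finset.card_nsmul_le_sum
      intro φ hφ
      exact (not_le.1 (Finset.mem_filter.1 hφ).2).le
    have h2 : ∑ φ ∈ Bad, ((S.conflict N n φ).card : ℝ) ≤
        ∑ φ ∈ S.emb N n, ((S.conflict N n φ).card : ℝ) :=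
      Finset.sum_le_sum_of_subset_of_nonneg (Finset.filter_subset _ _)
        (fun _ _ _ => by positivity)
    have h3 : ∑ φ ∈ S.emb N n, ((S.conflict N n φ).card : ℝ) ≤
        (S.interCount N n : ℝ) + e * r := by
      have := S.sum_conflict_le N n hNn
      rw [hm] at this
      rw [hr, he]
      exact_mod_cast this
    have h4 : (S.interCount N n : ℝ) ≤ η / 2 * e * d := by
      rw [div_lt_iff₀ (by positivity)] at hI
      have h : ν * (S.interCount N n : ℝ) ≤ ν * (η / 2 * e * d) := by
        refine hI.le.trans (le_of_eq ?_)
        rw [hedν]; ring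
      exact le_of_mul_le_mul_left h hν0
    have h5 : r ≤ η / 2 * d := by
      rw [div_le_iff₀ hη0] at hd2
      linarith
    have h6 : (Bad.card : ℝ) * K ≤ η * e * d := by
      have : e * r ≤ e * (η / 2 * d) := by gcongr
      linarith
    have h7 : K * ((Bad.card : ℝ) * F.card) ≤ K * (ε / 2 * e) := by
      have h8 : (Bad.card : ℝ) * K * F.card ≤ η * e * d * F.card := by gcongr
      have h9 : η * e * d * F.card = K * (ε / 2 * e) := by
        rw [hη, hKdef]; field_simp
      linarith
    exact le_of_mul_le_mul_left h7 hK0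
  -- the hypergraph
  let π : Fin (m + 1 + 1) → ((S.V N → S.V n) × (S.V N → Fin k)) → S.V n × Fin k :=
    fun i p => (p.1 (g i), p.2 (g i))
  let A : Finset ((S.V N → S.V n) × (S.V N → Fin k)) := Good ×ˢ F
  let μ : S.V n × Fin k → ℝ := fun w =>
    1 + ∑ i, ((A.filter (fun p => π i p = w)).card : ℝ) / d
  have hAcard : (A.card : ℝ) ≤ e * F.card := by
    have h : A.card ≤ (S.emb N n).card * F.card := by
      rw [Finset.card_product]
      exact Nat.mul_le_mul_right _ (Finset.card_le_card (Finset.filter_subset _ _))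
    rw [he]; exact_mod_cast h
  have hMle : ∑ w, μ w ≤ L * ν := by
    have h1 : ∑ w, μ w = (Fintype.card (S.V n × Fin k) : ℝ) + (m + 2) * (A.card : ℝ) / d := by
      simp only [μ]
      rw [Finset.sum_add_distrib, Finset.sum_comm]
      have : ∀ i : Fin (m + 1 + 1), ∑ w, ((A.filter (fun p => π i p = w)).card : ℝ) / d =
          (A.card : ℝ) / d := by
        intro i
        rw [← Finset.sum_div, ← card_eq_sum_deg]
      rw [Finset.sum_congr rfl (fun i _ => this i)]
      simp only [Finset.sum_const, Finset.card_univ, nsmul_eq_mul, Fintype.card_fin]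
      push_cast
      ring
    rw [h1, Fintype.card_prod, Fintype.card_fin]
    push_cast
    rw [← hν, hL]
    have h2 : (m + 2) * (A.card : ℝ) / d ≤ (m + 2) * (e * F.card) / d := by gcongr
    have h3 : (m + 2) * (e * F.card) / d = (m + 2) * F.card * ν := by
      rw [hedν]; field_simp
    linarith
  obtain ⟨𝒞, h𝒞1, h𝒞2, h𝒞3⟩ := hcont (S.V n × Fin k)
    ((S.V N → S.V n) × (S.V N → Fin k)) π μ A d (κ * d)
    (by
      intro w
      have : 0 ≤ ∑ i, ((A.filter (fun p => π i p = w)).card : ℝ) / d :=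
        Finset.sum_nonneg (fun _ _ => by positivity)
      simp only [μ]
      linarith)
    hd0 le_rfl
    (by
      intro i w
      have h1 : ((A.filter (fun p => π i p = w)).card : ℝ) / d ≤
          ∑ i, ((A.filter (fun p => π i p = w)).card : ℝ) / d :=
        Finset.single_le_sum (f := fun i => ((A.filter (fun p => π i p = w)).card : ℝ) / d)
          (fun _ _ => by positivity) (Finset.mem_univ i)
      have h2 : ((A.filter (fun p => π i p = w)).card : ℝ) / d ≤ μ w := by
        simp only [μ]
        linarith
      rw [div_le_iff₀ hd0] at h2
      linarith)
    (by
      intro i j hij v w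
      rcases (A.filter (fun p => π i p = v ∧ π j p = w)).eq_empty_or_nonempty with h0 | ⟨p, hp⟩
      · rw [h0]
        simp only [Finset.card_empty, Nat.cast_zero]
        positivity
      obtain ⟨hpA, hpv, hpw⟩ := Finset.mem_filter.1 hp
      have hpG := (Finset.mem_product.1 hpA).1
      obtain ⟨hpE, hpK⟩ := Finset.mem_filter.1 hpG
      have hsub : A.filter (fun p => π i p = v ∧ π j p = w) ⊆ S.conflict N n p.1 ×ˢ F := by
        intro q hq
        obtain ⟨hqA, hqv, hqw⟩ := Finset.mem_filter.1 hq
        obtain ⟨hqG, hqF⟩ := Finset.mem_product.1 hqA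
        obtain ⟨hqE, _⟩ := Finset.mem_filter.1 hqG
        refine Finset.mem_product.2 ⟨Finset.mem_filter.2 ⟨hqE, ?_⟩, hqF⟩
        have e1 : q.1 (g i) = p.1 (g i) := congrArg Prod.fst (hqv.trans hpv.symm)
        have e2 : q.1 (g j) = p.1 (g j) := congrArg Prod.fst (hqw.trans hpw.symm)
        rw [Finset.one_lt_card]
        refine ⟨p.1 (g i), ?_, p.1 (g j), ?_, ?_⟩
        · exact Finset.mem_inter.2 ⟨Finset.mem_image_of_mem _ (Finset.mem_univ _),
            e1 ▸ Finset.mem_image_of_mem _ (Finset.mem_univ _)⟩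
        · exact Finset.mem_inter.2 ⟨Finset.mem_image_of_mem _ (Finset.mem_univ _),
            e2 ▸ Finset.mem_image_of_mem _ (Finset.mem_univ _)⟩
        · intro h
          exact hij (g.injective (hinj p.1 hpE h))
      have h1 : ((A.filter (fun p => π i p = v ∧ π j p = w)).card : ℝ) ≤
          ((S.conflict N n p.1).card : ℝ) * F.card := by
        have := Finset.card_le_card hsub
        rw [Finset.card_product] at this
        exact_mod_cast this
      have h2 : ((S.conflict N n p.1).card : ℝ) * F.card ≤ K * F.card := by gcongr
      have h3 : K * F.card = κ * d := by rw [hKdef]; field_simp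
      linarith)
  -- templates
  let tm : Finset (S.V n × Fin k) → (S.V n → Finset (Fin k)) :=
    fun C x => Finset.univ.filter (fun a => (x, a) ∈ C)
  refine ⟨(𝒞.image tm).filter (fun t => ∀ x, (t x).Nonempty), ?_, ?_, ?_, ?_⟩
  · intro t ht
    exact (Finset.mem_filter.1 ht).2
  · intro c hc
    obtain ⟨C, hC, hIC⟩ := h𝒞3 (Finset.univ.image (fun x => (x, c x))) (by
      intro p hp
      by_contra hcon
      push Not at hcon
      obtain ⟨hpG, hpF⟩ := Finset.mem_product.1 hp
      obtain ⟨hpE, _⟩ := Finset.mem_filter.1 hpG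
      apply hc p.1 hpE
      have : (fun v => c (p.1 v)) = p.2 := by
        funext v
        obtain ⟨i, rfl⟩ := g.surjective v
        obtain ⟨x, _, hx⟩ := Finset.mem_image.1 (hcon i)
        have hx1 : x = p.1 (g i) := congrArg Prod.fst hx
        have hx2 : c x = p.2 (g i) := congrArg Prod.snd hx
        rw [← hx1, hx2]
      rw [this]
      exact hpF)
    have hmem : ∀ x, c x ∈ tm C x := by
      intro x
      exact Finset.mem_filter.2 ⟨Finset.mem_univ _,
        hIC (Finset.mem_image_of_mem _ (Finset.mem_univ x))⟩
    exact ⟨tm C, Finset.mem_filter.2 ⟨Finset.mem_image_of_mem _ hC, fun x => ⟨_, hmem x⟩⟩, hmem⟩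
  · intro t ht
    obtain ⟨C, hC, rfl⟩ := Finset.mem_image.1 (Finset.mem_filter.1 ht).1
    have h1 := h𝒞2 C hC
    have hsub : ((S.emb N n) ×ˢ F).filter (fun p => ∀ v, p.2 v ∈ tm C (p.1 v)) ⊆
        A.filter (fun p => ∀ i, π i p ∈ C) ∪ Bad ×ˢ F := by
      intro p hp
      obtain ⟨hpEF, hpC⟩ := Finset.mem_filter.1 hp
      obtain ⟨hpE, hpF⟩ := Finset.mem_product.1 hpEF
      by_cases hpK : ((S.conflict N n p.1).card : ℝ) ≤ K
      · refine Finset.mem_union_left _ (Finset.mem_filter.2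
          ⟨Finset.mem_product.2 ⟨Finset.mem_filter.2 ⟨hpE, hpK⟩, hpF⟩, fun i => ?_⟩)
        exact (Finset.mem_filter.1 (hpC (g i))).2
      · exact Finset.mem_union_right _
          (Finset.mem_product.2 ⟨Finset.mem_filter.2 ⟨hpE, hpK⟩, hpF⟩)
    have h2 : ((((S.emb N n) ×ˢ F).filter (fun p => ∀ v, p.2 v ∈ tm C (p.1 v))).card : ℝ) ≤
        ((A.filter (fun p => ∀ i, π i p ∈ C)).card : ℝ) + (Bad.card : ℝ) * F.card := by
      have := (Finset.card_le_card hsub).trans (Finset.card_union_le _ _)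
      rw [Finset.card_product] at this
      exact_mod_cast this
    have h3 : ε / (2 * L) * d * ∑ w, μ w ≤ ε / (2 * L) * d * (L * ν) := by gcongr
    have h4 : ε / (2 * L) * d * (L * ν) = ε / 2 * e := by
      rw [hedν]; field_simp
    linarith
  · have h1 : ((((𝒞.image tm).filter (fun t => ∀ x, (t x).Nonempty)).card : ℕ) : ℝ) ≤
        (𝒞.card : ℝ) := by
      exact_mod_cast (Finset.card_filter_le _ _).trans Finset.card_image_le
    refine h1.trans (h𝒞1.trans ?_)
    have hk0 : (0:ℝ) < k := by
      have : 0 < k := by omega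
      exact_mod_cast this
    rw [Real.rpow_def_of_pos hk0]
    apply Real.exp_le_exp.2
    have hlogk : Real.log 2 ≤ Real.log k :=
      Real.log_le_log (by norm_num) (by exact_mod_cast hk)
    calc ε * Real.log 2 / L * ∑ w, μ w ≤ ε * Real.log 2 / L * (L * ν) := by gcongr
      _ = Real.log 2 * (ε * ν) := by field_simp
      _ ≤ Real.log k * (ε * ν) := by gcongr

/-- **Theorem (container theorem for `[k]`-decorated ssee-s).**
Let `V` be a good ssee, `F` a nonempty set of `k`-colourings of `V_N`, and
`P = Forb_V(F)`.  For every `ε > 0` there is `n₀` such that for every `n ≥ n₀` there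
is a collection `T` of `k`-colouring templates for `V_n` with:
(a) every colouring in `P_n` is a realisation of some `t ∈ T`;
(b) for each `t ∈ T` at most `ε |binom(V_n,V_N)|` pairs `(φ, c)` with
    `φ ∈ binom(V_n,V_N)`, `c ∈ F` have `c ∈ ⟨t_{↓φ}⟩`;
(c) `|T| ≤ k^{ε |V_n|}`. -/
theorem ssee_container_theorem
    (S : Ssee) (hS : S.Good) (k N : ℕ)
    (F : Finset (S.V N → Fin k)) (hF : F.Nonempty)
    (ε : ℝ) (hε : 0 < ε) :
    ∃ n₀ : ℕ, ∀ n ≥ n₀, ∃ T : Finset (S.V n → Finset (Fin k)),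
      (∀ t ∈ T, ∀ x, (t x).Nonempty) ∧
      (∀ c : S.V n → Fin k, (∀ φ ∈ S.emb N n, (fun v => c (φ v)) ∉ F) →
        ∃ t ∈ T, ∀ x, c x ∈ t x) ∧
      (∀ t ∈ T,
        ((((S.emb N n) ×ˢ F).filter (fun p => ∀ v, p.2 v ∈ t (p.1 v))).card : ℝ) ≤
          ε * ((S.emb N n).card : ℝ)) ∧
      ((T.card : ℝ) ≤ (k : ℝ) ^ (ε * (Fintype.card (S.V n) : ℝ))) := by
  have hk1 : 1 ≤ k := by
    obtain ⟨c, _⟩ := hF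
    have := (c (Classical.arbitrary _)).pos
    omega
  have hpos : 0 < Fintype.card (S.V N) := Fintype.card_pos
  rcases Nat.lt_or_ge 1 (Fintype.card (S.V N)) with h1 | h1
  · rcases Nat.lt_or_ge 1 k with hk | hk
    · exact S.container_main hS k N F hF hk (Fintype.card (S.V N) - 2) (by omega) ε hε
    · have hk' : k = 1 := le_antisymm hk hk1
      subst hk'
      obtain ⟨n₀, hn₀⟩ := eventually_atTop.1 ((hS.2.1 N h1).eventually_gt_atTop 0)
      refine ⟨n₀, fun n hn => ⟨∅, by simp, ?_, by simp, ?_⟩⟩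
      · intro c hc
        exfalso
        have hlt := hn₀ n hn
        have hne : (S.emb N n).Nonempty := by
          rw [Finset.nonempty_iff_ne_empty]
          intro h0
          rw [h0] at hlt
          simp at hlt
        obtain ⟨φ, hφ⟩ := hne
        obtain ⟨f, hf⟩ := hF
        apply hc φ hφ
        rw [Subsingleton.elim (fun v => c (φ v)) f]
        exact hf
      · simp
  · exact ⟨0, fun n _ => S.container_single k N F hk1 (by omega) ε hε n⟩

end
end

section
/- Let c ∈ (0,1) and let f : {0,1}^n → [0,1] be a random function chosen according to the uniform (Lebesgue product) measure on [0,1]^{{0,1}^n}. Then the probability p_n that f is c-Lipschitz satisfies p_n = c^{2^n + o(2^n)}; that is, 2^{−n}·log p_n → log c as n → ∞. -/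
open MeasureTheory Filter Set

noncomputable section

/-- The unit cube `[0,1]^ι`. -/
def unitCube (ι : Type) : Set (ι → ℝ) := Set.univ.pi fun _ => Set.Icc (0:ℝ) 1

/-- `f : {0,1}^n → [0,1]` is `c`-Lipschitz if changing one coordinate of the input
changes the value by at most `c`. -/
def IsCLipschitz (n : ℕ) (c : ℝ) (f : (Fin n → Bool) → ℝ) : Prop :=
  ∀ u v : Fin n → Bool,
    (Finset.univ.filter (fun i => u i ≠ v i)).card = 1 → |f u - f v| ≤ c

/-- Finner's inequality for a regular incidence structure. -/
lemma finner_aux {ι J : Type} [Fintype ι] [DecidableEq ι] [Fintype J]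
    (ν : Measure ℝ) [IsProbabilityMeasure ν] (R : J → ι → Prop) (n : ℕ) (hn : 1 ≤ n)
    (H : J → (ι → ℝ) → ENNReal) (hH : ∀ j, Measurable (H j))
    (hdep : ∀ j i, ¬ R j i → ∀ x y, H j (Function.update x i y) = H j x)
    (hcard : ∀ i, Nat.card {j // R j i} = n) (s : Finset ι) (x : ι → ℝ) :
    lmarginal (fun _ : ι => ν) s (fun x => ∏ j, H j x ^ ((n:ℝ)⁻¹)) x ≤
      ∏ j, (lmarginal (fun _ : ι => ν) s (H j) x) ^ ((n:ℝ)⁻¹) := by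
  classical
  induction s using Finset.induction_on generalizing x with
  | empty => simp
  | insert i s hi ih =>
    have hmeas : Measurable (fun x => ∏ j, H j x ^ ((n:ℝ)⁻¹)) :=
      Finset.measurable_prod _ fun j _ => (hH j).pow_const _
    rw [lmarginal_insert _ hmeas hi]
    set K : J → ℝ → ENNReal :=
      fun j y => lmarginal (fun _ : ι => ν) s (H j) (Function.update x i y) with hK
    have hKm : ∀ j, Measurable (K j) := fun j =>
      ((hH j).lmarginal (fun _ : ι => ν)).comp (measurable_update x)
    have hKc : ∀ j, ¬ R j i → ∀ y, K j y = lmarginal (fun _ : ι => ν) s (H j) x := by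
      intro j hj y
      simp only [hK]
      rw [lmarginal_update_of_notMem (hH j) hi]
      congr 1
      funext z
      exact hdep j i hj z y
    have hR : ∀ j, lmarginal (fun _ : ι => ν) (insert i s) (H j) x = ∫⁻ y, K j y ∂ν := by
      intro j
      rw [lmarginal_insert _ (hH j) hi]
    simp_rw [hR]
    calc _ ≤ ∫⁻ y, ∏ j, K j y ^ ((n:ℝ)⁻¹) ∂ν := lintegral_mono fun y => ih _
      _ = ∫⁻ y, (∏ j with ¬ R j i, (lmarginal (fun _ : ι => ν) s (H j) x) ^ ((n:ℝ)⁻¹)) *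
            ∏ j with R j i, K j y ^ ((n:ℝ)⁻¹) ∂ν := by
          refine lintegral_congr fun y => ?_
          rw [← Finset.prod_filter_mul_prod_filter_not Finset.univ (fun j => R j i), mul_comm]
          congr 1
          refine Finset.prod_congr rfl fun j hj => ?_
          rw [hKc j (by simpa using hj)]
      _ = (∏ j with ¬ R j i, (lmarginal (fun _ : ι => ν) s (H j) x) ^ ((n:ℝ)⁻¹)) *
            ∫⁻ y, ∏ j with R j i, K j y ^ ((n:ℝ)⁻¹) ∂ν := by
          rw [lintegral_const_mul]
          exact Finset.measurable_prod _ fun j _ => (hKm j).pow_const _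
      _ ≤ (∏ j with ¬ R j i, (lmarginal (fun _ : ι => ν) s (H j) x) ^ ((n:ℝ)⁻¹)) *
            ∏ j with R j i, (∫⁻ y, K j y ∂ν) ^ ((n:ℝ)⁻¹) := by
          gcongr
          refine ENNReal.lintegral_prod_norm_pow_le _ (fun j _ => (hKm j).aemeasurable) ?_ ?_
          · have := hcard i
            rw [Nat.card_eq_fintype_card, Fintype.card_subtype] at this
            rw [Finset.sum_const, this, nsmul_eq_mul]
            exact mul_inv_cancel₀ (by positivity)
          · intros; positivity
      _ = _ := by
          rw [← Finset.prod_filter_mul_prod_filter_not Finset.univ (fun j => R j i), mul_comm]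
          congr 1
          refine Finset.prod_congr rfl fun j hj => ?_
          congr 1
          rw [lintegral_congr (hKc j (by simpa using hj))]
          simp

lemma finner {ι J : Type} [Fintype ι] [Fintype J]
    (ν : Measure ℝ) [IsProbabilityMeasure ν] (R : J → ι → Prop) (n : ℕ) (hn : 1 ≤ n)
    (G : J → (ι → ℝ) → ENNReal) (hG : ∀ j, Measurable (G j))
    (hdep : ∀ j x y, (∀ i, R j i → x i = y i) → G j x = G j y)
    (hcard : ∀ i, Nat.card {j // R j i} = n) :
    ∫⁻ x, ∏ j, G j x ∂(Measure.pi fun _ : ι => ν) ≤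
      ∏ j, (∫⁻ x, G j x ^ n ∂(Measure.pi fun _ : ι => ν)) ^ ((n:ℝ)⁻¹) := by
  classical
  have h := finner_aux ν R n hn (fun j x => G j x ^ n) (fun j => (hG j).pow_const _) (by
    intro j i hj x y
    congr 1
    apply hdep
    intro k hk
    rw [Function.update_of_ne]
    rintro rfl
    exact hj hk) hcard Finset.univ 0
  simp only [lmarginal_univ] at h
  refine le_trans (le_of_eq ?_) h
  refine lintegral_congr fun x => Finset.prod_congr rfl fun j _ => ?_
  rw [ENNReal.pow_rpow_inv_natCast (by omega)]

/-- parity of a vertex -/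
def par {n : ℕ} (v : Fin n → Bool) : ZMod 2 := ∑ i, if v i then 1 else 0

/-- adjacency -/
def adj {n : ℕ} (u v : Fin n → Bool) : Prop :=
  (Finset.univ.filter (fun i => u i ≠ v i)).card = 1

def flip' {n : ℕ} (v : Fin n → Bool) (i : Fin n) : Fin n → Bool := Function.update v i (!v i)

lemma adj_iff {n : ℕ} (u v : Fin n → Bool) : adj u v ↔ ∃ i, v = flip' u i := by
  unfold adj flip'
  rw [Finset.card_eq_one]
  refine exists_congr fun i => ?_
  constructor
  · intro h
    funext k
    have := Finset.ext_iff.1 h k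
    by_cases hk : k = i
    · subst hk
      simp at this ⊢
      cases h1 : u k <;> cases h2 : v k <;> simp_all
    · simp [hk] at this ⊢
      exact this.symm
  · rintro rfl
    ext k
    by_cases hk : k = i
    · subst hk; simp
    · simp [hk]

lemma adj_comm' {n : ℕ} (u v : Fin n → Bool) : adj u v ↔ adj v u := by
  unfold adj
  simp_rw [ne_comm]

lemma par_flip {n : ℕ} (v : Fin n → Bool) (i : Fin n) : par (flip' v i) = par v + 1 := by
  unfold par flip'
  rw [← Finset.add_sum_erase _ _ (Finset.mem_univ i),
    ← Finset.add_sum_erase (a := i) _ (fun i => if v i then (1 : ZMod 2) else 0) (Finset.mem_univ i)]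
  have : ∑ x ∈ Finset.univ.erase i, (if Function.update v i (!v i) x = true then (1:ZMod 2) else 0)
     = ∑ x ∈ Finset.univ.erase i, (if v x = true then 1 else 0) := by
    refine Finset.sum_congr rfl fun k hk => ?_
    rw [Function.update_of_ne (Finset.ne_of_mem_erase hk)]
  rw [this]
  have h2 : (1 : ZMod 2) + 1 = 0 := by decide
  cases h : v i
  · simp; ring
  · simp; linear_combination -h2

lemma flip_inj {n : ℕ} (v : Fin n → Bool) : Function.Injective (flip' v) := by
  intro i j h
  by_contra hij
  have := congrFun h i
  simp [flip', hij] at this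

lemma zmod2 (a : ZMod 2) : a ≠ 0 ↔ a + 1 = 0 := by revert a; decide

lemma card_nbrs {n : ℕ} (v : Fin n → Bool) (p : (Fin n → Bool) → Prop)
    (hp : ∀ i, p (flip' v i)) : Nat.card {u : {u // p u} // adj v u.1} = n := by
  let e : Fin n → {u : {u // p u} // adj v u.1} :=
    fun i => ⟨⟨flip' v i, hp i⟩, (adj_iff _ _).2 ⟨i, rfl⟩⟩
  have he : Function.Bijective e := by
    constructor
    · intro i j h
      apply flip_inj v
      simpa [e] using h
    · rintro ⟨⟨u, hu⟩, h⟩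
      obtain ⟨i, hi⟩ := (adj_iff _ _).1 h
      refine ⟨i, ?_⟩
      simp only [e, Subtype.mk.injEq]
      exact hi.symm
  rw [← Nat.card_eq_of_bijective e he]
  simp

lemma flip_flip_self {n : ℕ} (v : Fin n → Bool) (i : Fin n) : flip' (flip' v i) i = v := by
  funext k
  by_cases hk : k = i
  · subst hk; simp [flip']
  · simp [flip', hk]

lemma card_odd {n : ℕ} (hn : 1 ≤ n) :
    2 * Fintype.card {v : Fin n → Bool // ¬ par v = 0} = 2 ^ n := by
  have i : Fin n := ⟨0, hn⟩
  have e : {v : Fin n → Bool // ¬ par v = 0} ≃ {v : Fin n → Bool // par v = 0} :=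
    { toFun := fun v => ⟨flip' v.1 i, by rw [par_flip]; exact (zmod2 _).1 v.2⟩
      invFun := fun v => ⟨flip' v.1 i, by rw [par_flip, v.2]; decide⟩
      left_inv := fun v => Subtype.ext (flip_flip_self _ _)
      right_inv := fun v => Subtype.ext (flip_flip_self _ _) }
  have h1 := Fintype.card_subtype_compl (fun v : Fin n → Bool => par v = 0)
  have h2 := Fintype.card_congr e
  have h3 := Fintype.card_subtype_le (fun v : Fin n → Bool => par v = 0)
  have h4 : Fintype.card (Fin n → Bool) = 2 ^ n := by simp
  omega

/-- uniform measure on `[0,1]` -/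
def nuI : Measure ℝ := volume.restrict (Set.Icc (0:ℝ) 1)

instance : IsProbabilityMeasure nuI := ⟨by simp [nuI]⟩

lemma nuI_le (s : Set ℝ) : nuI s ≤ volume s := Measure.restrict_apply_le _ _

lemma pi_nuI (ι : Type) [Fintype ι] :
    Measure.pi (fun _ : ι => nuI) = (volume : Measure (ι → ℝ)).restrict (unitCube ι) := by
  rw [unitCube, volume_pi, Measure.restrict_pi_pi]
  rfl

/-- allowed values -/
def allowed {ι : Type} (c : ℝ) (S : ι → Prop) (a : ι → ℝ) : Set ℝ :=
  {y | ∀ u, S u → |y - a u| ≤ c}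

lemma amgm (c l : ℝ) (d : ℝ) :
    ENNReal.ofReal (2 * c + 2 * d - l) * ENNReal.ofReal l ≤ ENNReal.ofReal ((c + d) ^ 2) := by
  rcases le_total 0 l with h | h
  · rw [← ENNReal.ofReal_mul' h]
    apply ENNReal.ofReal_le_ofReal
    nlinarith [sq_nonneg (c + d - l)]
  · rw [ENNReal.ofReal_of_nonpos h]; simp

lemma box_bound {ι : Type} [Fintype ι] (S : ι → Prop) (n : ℕ) (hS : Nat.card {u // S u} = n)
    (p q : ℝ) :
    Measure.pi (fun _ : ι => nuI) {a | ∀ u, S u → a u ∈ Set.Icc p q} ≤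
      ENNReal.ofReal (q - p) ^ n := by
  classical
  have : {a : ι → ℝ | ∀ u, S u → a u ∈ Set.Icc p q} =
      Set.univ.pi (fun u => if S u then Set.Icc p q else Set.univ) := by
    ext a
    simp only [Set.mem_ofPred_eq, Set.mem_univ_pi]
    refine forall_congr' fun u => ?_
    by_cases h : S u <;> simp [h]
  rw [this, Measure.pi_pi]
  calc _ ≤ ∏ u, (if S u then ENNReal.ofReal (q - p) else 1) := by
        refine Finset.prod_le_prod' fun u _ => ?_
        by_cases h : S u
        · simp only [h, if_true]
          exact (nuI_le _).trans (by simp)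
        · simp [h]
    _ = _ := by
        rw [← Finset.prod_filter, Finset.prod_const]
        rw [Nat.card_eq_fintype_card, Fintype.card_subtype] at hS
        rw [hS]

lemma pointwise {ι : Type} [Fintype ι] (S : ι → Prop) (n : ℕ) (hn : 1 ≤ n)
    (hS : Nat.card {u // S u} = n) (c : ℝ) (a : ι → ℝ) (ha : a ∈ unitCube ι) :
    ∃ i ∈ Finset.range (n + 1), ∃ j ∈ Finset.range (n + 1),
      nuI (allowed c S a) ≤
        ENNReal.ofReal (2 * c + 2 * (n:ℝ)⁻¹ - (((j:ℝ) + 1) / n - (i:ℝ) / n)) ∧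
      ∀ u, S u → a u ∈ Set.Icc ((i:ℝ) / n) (((j:ℝ) + 1) / n) := by
  classical
  have hn0 : (0:ℝ) < n := by exact_mod_cast hn
  have ha' : ∀ u, 0 ≤ a u ∧ a u ≤ 1 := fun u => ha u (Set.mem_univ u)
  have hne : (Finset.univ.filter S).Nonempty := by
    rw [← Finset.card_pos]
    rw [Nat.card_eq_fintype_card, Fintype.card_subtype] at hS
    exact lt_of_lt_of_eq hn hS.symm
  let idx : ι → ℕ := fun u => ⌊(n:ℝ) * a u⌋₊
  have hlo : ∀ u, (idx u : ℝ) / n ≤ a u := by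
    intro u
    rw [div_le_iff₀ hn0, mul_comm]
    exact Nat.floor_le (mul_nonneg hn0.le (ha' u).1)
  have hhi : ∀ u, a u ≤ ((idx u : ℝ) + 1) / n := by
    intro u
    rw [le_div_iff₀ hn0, mul_comm]
    exact (Nat.lt_floor_add_one _).le
  have hr : ∀ u, idx u ∈ Finset.range (n + 1) := by
    intro u
    rw [Finset.mem_range, Nat.lt_succ_iff]
    apply Nat.floor_le_of_le
    nlinarith [(ha' u).2]
  obtain ⟨u0, hu0, h0⟩ := Finset.exists_min_image _ idx hne
  obtain ⟨u1, hu1, h1⟩ := Finset.exists_max_image _ idx hne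
  simp only [Finset.mem_filter, Finset.mem_univ, true_and] at hu0 hu1 h0 h1
  refine ⟨idx u0, hr _, idx u1, hr _, ?_, ?_⟩
  · calc nuI (allowed c S a) ≤ nuI (Set.Icc (a u1 - c) (a u0 + c)) := by
          apply measure_mono
          intro y hy
          have e0 := abs_le.1 (hy u0 hu0)
          have e1 := abs_le.1 (hy u1 hu1)
          exact ⟨by linarith, by linarith⟩
      _ ≤ volume (Set.Icc (a u1 - c) (a u0 + c)) := nuI_le _
      _ = ENNReal.ofReal (a u0 + c - (a u1 - c)) := by simp
      _ ≤ _ := by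
          apply ENNReal.ofReal_le_ofReal
          have e0 := hhi u0
          have e1 := hlo u1
          rw [add_div] at e0 ⊢
          rw [one_div] at e0 ⊢
          linarith
  · intro u hu
    have e0 : (idx u0 : ℝ) ≤ idx u := by exact_mod_cast h0 u hu
    have e1 : (idx u : ℝ) ≤ idx u1 := by exact_mod_cast h1 u hu
    constructor
    · refine le_trans ?_ (hlo u)
      gcongr
    · refine (hhi u).trans ?_
      gcongr

lemma kbound {ι : Type} [Fintype ι] (S : ι → Prop) (n : ℕ) (hn : 1 ≤ n)
    (hS : Nat.card {u // S u} = n) (c : ℝ) :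
    ∫⁻ a, nuI (allowed c S a) ^ n ∂(Measure.pi fun _ : ι => nuI) ≤
      ((n:ENNReal) + 1) ^ 2 * ENNReal.ofReal ((c + (n:ℝ)⁻¹) ^ 2) ^ n := by
  classical
  let B : ℕ → ℕ → Set (ι → ℝ) := fun i j =>
    {a | ∀ u, S u → a u ∈ Set.Icc ((i:ℝ) / n) (((j:ℝ) + 1) / n)}
  let w : ℕ → ℕ → ENNReal := fun i j =>
    ENNReal.ofReal (2 * c + 2 * (n:ℝ)⁻¹ - (((j:ℝ) + 1) / n - (i:ℝ) / n)) ^ n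
  have hB : ∀ i j, MeasurableSet (B i j) := by
    intro i j
    have : B i j = ⋂ u, ⋂ (_ : S u), (fun a : ι → ℝ => a u) ⁻¹'
        Set.Icc ((i:ℝ) / n) (((j:ℝ) + 1) / n) := by
      ext a; simp [B]
    rw [this]
    exact MeasurableSet.iInter fun u => MeasurableSet.iInter fun _ =>
      (measurable_pi_apply u) measurableSet_Icc
  have hcube : MeasurableSet (unitCube ι) := MeasurableSet.univ_pi fun _ => measurableSet_Icc
  calc _ ≤ ∫⁻ a, ∑ i ∈ Finset.range (n + 1), ∑ j ∈ Finset.range (n + 1),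
          (B i j).indicator (fun _ => w i j) a ∂(Measure.pi fun _ : ι => nuI) := by
        apply lintegral_mono_ae
        have hae : ∀ᵐ a ∂(Measure.pi fun _ : ι => nuI), a ∈ unitCube ι := by
          rw [pi_nuI]
          exact ae_restrict_mem hcube
        filter_upwards [hae] with a ha
        obtain ⟨i, hi, j, hj, h1, h2⟩ := pointwise S n hn hS c a ha
        calc nuI (allowed c S a) ^ n ≤ w i j := by
              simp only [w]
              gcongr
          _ = (B i j).indicator (fun _ => w i j) a := by
              rw [Set.indicator_of_mem]
              exact h2
          _ ≤ ∑ j ∈ Finset.range (n + 1), (B i j).indicator (fun _ => w i j) a :=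
              Finset.single_le_sum (f := fun j => (B i j).indicator (fun _ => w i j) a)
                (fun _ _ => zero_le) hj
          _ ≤ _ := Finset.single_le_sum (f := fun i => ∑ j ∈ Finset.range (n + 1),
              (B i j).indicator (fun _ => w i j) a) (fun _ _ => zero_le) hi
    _ = ∑ i ∈ Finset.range (n + 1), ∑ j ∈ Finset.range (n + 1),
          w i j * (Measure.pi fun _ : ι => nuI) (B i j) := by
        rw [lintegral_finsetSum]
        · refine Finset.sum_congr rfl fun i _ => ?_
          rw [lintegral_finsetSum]
          · refine Finset.sum_congr rfl fun j _ => ?_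
            rw [lintegral_indicator_const (hB i j)]
          · intro j _
            exact measurable_const.indicator (hB i j)
        · intro i _
          exact Finset.measurable_sum _ fun j _ => measurable_const.indicator (hB i j)
    _ ≤ ∑ i ∈ Finset.range (n + 1), ∑ j ∈ Finset.range (n + 1),
          ENNReal.ofReal ((c + (n:ℝ)⁻¹) ^ 2) ^ n := by
        refine Finset.sum_le_sum fun i _ => Finset.sum_le_sum fun j _ => ?_
        calc _ ≤ w i j * ENNReal.ofReal (((j:ℝ) + 1) / n - (i:ℝ) / n) ^ n := by
              gcongr
              exact box_bound S n hS _ _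
          _ ≤ _ := by
              simp only [w]
              rw [← mul_pow]
              gcongr
              exact amgm _ _ _
    _ = _ := by
        simp
        ring

lemma isClosed_joint {ι : Type} [Fintype ι] (c : ℝ) (S : ι → Prop) :
    MeasurableSet {q : (ι → ℝ) × ℝ | q.2 ∈ allowed c S q.1} := by
  have : {q : (ι → ℝ) × ℝ | q.2 ∈ allowed c S q.1} =
      ⋂ u, ⋂ (_ : S u), {q | |q.2 - q.1 u| ≤ c} := by
    ext q; simp [allowed]
  rw [this]
  exact MeasurableSet.iInter fun u => MeasurableSet.iInter fun _ =>
    measurableSet_le (by fun_prop) measurable_const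

lemma prob_le (n : ℕ) (hn : 1 ≤ n) (c : ℝ) :
    volume {f : (Fin n → Bool) → ℝ | f ∈ unitCube (Fin n → Bool) ∧ IsCLipschitz n c f} ≤
      ((((n:ENNReal) + 1) ^ 2 * ENNReal.ofReal ((c + (n:ℝ)⁻¹) ^ 2) ^ n) ^ ((n:ℝ)⁻¹)) ^
        Fintype.card {v : Fin n → Bool // ¬ par v = 0} := by
  classical
  let E := {v : Fin n → Bool // par v = 0}
  let O := {v : Fin n → Bool // ¬ par v = 0}
  let S : O → E → Prop := fun v u => adj v.1 u.1
  let B' : Set ((E → ℝ) × (O → ℝ)) := {q | ∀ v : O, q.2 v ∈ allowed c (S v) q.1}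
  have hB' : MeasurableSet B' := by
    have : B' = ⋂ v : O, (fun q : (E → ℝ) × (O → ℝ) => (q.1, q.2 v)) ⁻¹'
        {q : (E → ℝ) × ℝ | q.2 ∈ allowed c (S v) q.1} := by
      ext q; simp [B']
    rw [this]
    refine MeasurableSet.iInter fun v => ?_
    exact (by fun_prop : Measurable fun q : (E → ℝ) × (O → ℝ) => (q.1, q.2 v))
      (isClosed_joint c (S v))
  have hmp := measurePreserving_piEquivPiSubtypeProd (fun _ : Fin n → Bool => nuI)
    (fun v => par v = 0)
  have hcube : MeasurableSet (unitCube (Fin n → Bool)) :=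
    MeasurableSet.univ_pi fun _ => measurableSet_Icc
  calc _ ≤ (Measure.pi fun _ : Fin n → Bool => nuI)
          ((MeasurableEquiv.piEquivPiSubtypeProd (fun _ => ℝ) (fun v => par v = 0)) ⁻¹' B') := by
        rw [pi_nuI, Measure.restrict_apply' hcube]
        apply measure_mono
        rintro f ⟨hf, hl⟩
        refine ⟨?_, hf⟩
        intro v u hu
        exact hl _ _ hu
    _ = ((Measure.pi fun _ : E => nuI).prod (Measure.pi fun _ : O => nuI)) B' :=
        hmp.measure_preimage hB'.nullMeasurableSet
    _ = ∫⁻ a, ∏ v : O, nuI (allowed c (S v) a) ∂(Measure.pi fun _ : E => nuI) := by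
        rw [Measure.prod_apply hB']
        refine lintegral_congr fun a => ?_
        rw [← Measure.pi_pi]
        congr 1
        ext b
        simp [B']
    _ ≤ ∏ v : O, (∫⁻ a, nuI (allowed c (S v) a) ^ n ∂(Measure.pi fun _ : E => nuI)) ^
          ((n:ℝ)⁻¹) := by
        refine finner nuI S n hn (fun v a => nuI (allowed c (S v) a)) ?_ ?_ ?_
        · intro v
          exact measurable_measure_prodMk_left (isClosed_joint c (S v))
        · intro v x y h
          congr 1
          ext z
          simp only [allowed, Set.mem_ofPred_eq]
          exact forall_congr' fun u => forall_congr' fun hu => by rw [h u hu]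
        · intro u
          have := card_nbrs u.1 (fun v => ¬ par v = 0) (by
            intro i; rw [par_flip, u.2]; decide)
          simp only [S, adj_comm' _ u.1]
          exact this
    _ ≤ ∏ v : O, (((n:ENNReal) + 1) ^ 2 * ENNReal.ofReal ((c + (n:ℝ)⁻¹) ^ 2) ^ n) ^
          ((n:ℝ)⁻¹) := by
        refine Finset.prod_le_prod' fun v _ => ?_
        gcongr
        refine kbound (S v) n hn ?_ c
        exact card_nbrs v.1 (fun v => par v = 0) (by
            intro i; rw [par_flip]; exact (zmod2 _).1 v.2)
    _ = _ := by
        rw [Finset.prod_const, Finset.card_univ]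

lemma prob_ge (n : ℕ) (c : ℝ) (hc : c ∈ Set.Ioo (0:ℝ) 1) :
    ENNReal.ofReal c ^ (2 ^ n) ≤
    volume {f : (Fin n → Bool) → ℝ | f ∈ unitCube (Fin n → Bool) ∧ IsCLipschitz n c f} := by
  calc _ = volume (Set.univ.pi fun _ : Fin n → Bool => Set.Icc (0:ℝ) c) := by
        rw [volume_pi_pi]; simp
    _ ≤ _ := by
        apply measure_mono
        intro f hf
        have hf' : ∀ u, 0 ≤ f u ∧ f u ≤ c := fun u => hf u (Set.mem_univ u)
        refine ⟨fun u _ => ⟨(hf' u).1, (hf' u).2.trans hc.2.le⟩, fun u v _ => ?_⟩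
        rw [abs_le]
        constructor <;> linarith [(hf' u).1, (hf' u).2, (hf' v).1, (hf' v).2]

/-- **Theorem.** For `c ∈ (0,1)`, the probability that a uniformly random function
`f : {0,1}^n → [0,1]` is `c`-Lipschitz is `c^{2^n + o(2^n)}`; that is,
`2^{-n} log p_n → log c`. -/
theorem probability_lipschitz (c : ℝ) (hc : c ∈ Set.Ioo (0:ℝ) 1) :
    Tendsto (fun n : ℕ =>
      Real.log ((volume {f : (Fin n → Bool) → ℝ |
        f ∈ unitCube (Fin n → Bool) ∧ IsCLipschitz n c f}).toReal) / (2 : ℝ) ^ n)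
      atTop (nhds (Real.log c)) := by
  have hc0 : 0 < c := hc.1
  have hlim : Tendsto (fun n : ℕ => Real.log ((n:ℝ) + 1) / n + Real.log (c + (n:ℝ)⁻¹))
      atTop (nhds (Real.log c)) := by
    have h1 : Tendsto (fun n : ℕ => Real.log ((n:ℝ) + 1) / n) atTop (nhds 0) := by
      have h := (Real.isLittleO_log_id_atTop.tendsto_div_nhds_zero).comp
        (tendsto_atTop_add_const_right atTop (1:ℝ) (tendsto_natCast_atTop_atTop (R := ℝ)))
      have h2 : Tendsto (fun n : ℕ => 1 + (n:ℝ)⁻¹) atTop (nhds (1 + 0)) :=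
        tendsto_const_nhds.add tendsto_inv_atTop_nhds_zero_nat
      have h3 := h.mul h2
      rw [zero_mul] at h3
      refine h3.congr' ?_
      filter_upwards [eventually_ge_atTop 1] with n hn
      have : (0:ℝ) < n := by exact_mod_cast hn
      simp only [Function.comp, id]
      field_simp
    have h2 : Tendsto (fun n : ℕ => Real.log (c + (n:ℝ)⁻¹)) atTop (nhds (Real.log (c + 0))) :=
      (tendsto_const_nhds.add tendsto_inv_atTop_nhds_zero_nat).log (by linarith)
    simpa using h1.add h2
  refine tendsto_of_tendsto_of_tendsto_of_le_of_le' tendsto_const_nhds hlim ?_ ?_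
  all_goals
    filter_upwards [eventually_ge_atTop 1] with n hn
    have hn0 : (0:ℝ) < n := by exact_mod_cast hn
    have hle := prob_le n hn c
    have hge := prob_ge n c hc
    set P := volume {f : (Fin n → Bool) → ℝ |
      f ∈ unitCube (Fin n → Bool) ∧ IsCLipschitz n c f} with hP
    set m := Fintype.card {v : Fin n → Bool // ¬ par v = 0} with hm
    have hm2 : (2:ℝ) * m = 2 ^ n := by exact_mod_cast card_odd hn
    have hd : 0 < c + (n:ℝ)⁻¹ := by positivity
    have hrhs : ((((n:ENNReal) + 1) ^ 2 * ENNReal.ofReal ((c + (n:ℝ)⁻¹) ^ 2) ^ n) ^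
        ((n:ℝ)⁻¹)) ^ m = ENNReal.ofReal
          (((((n:ℝ) + 1) ^ 2 * ((c + (n:ℝ)⁻¹) ^ 2) ^ n) ^ ((n:ℝ)⁻¹)) ^ m) := by
      have e : (n:ENNReal) + 1 = ENNReal.ofReal ((n:ℝ) + 1) := by
        rw [ENNReal.ofReal_add hn0.le zero_le_one]; simp
      rw [e, ← ENNReal.ofReal_pow (by positivity), ← ENNReal.ofReal_pow (by positivity),
        ← ENNReal.ofReal_mul (by positivity), ENNReal.ofReal_rpow_of_pos (by positivity),
        ← ENNReal.ofReal_pow (by positivity)]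
    rw [hrhs] at hle
    have hfin : P ≠ ⊤ := ne_top_of_le_ne_top ENNReal.ofReal_ne_top hle
    have hge' : c ^ (2 ^ n) ≤ P.toReal := by
      rw [← ENNReal.ofReal_pow hc0.le] at hge
      exact (ENNReal.ofReal_le_iff_le_toReal hfin).1 hge
    have hpos : 0 < P.toReal := lt_of_lt_of_le (by positivity) hge'
    have hle' := ENNReal.toReal_le_of_le_ofReal (by positivity) hle
  · rw [le_div_iff₀ (by positivity)]
    have := Real.log_le_log (by positivity) hge'
    rw [Real.log_pow] at this
    push_cast at this
    linarith
  · rw [div_le_iff₀ (by positivity)]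
    have := Real.log_le_log hpos hle'
    rw [Real.log_pow, Real.log_rpow (by positivity), Real.log_mul (by positivity) (by positivity),
      Real.log_pow, Real.log_pow, Real.log_pow] at this
    refine this.trans (le_of_eq ?_)
    rw [← hm2]
    push_cast
    field_simp

end
end

section
/- Let M_n ⊆ [0,1]^{E(K_n)} be the metric polytope. Then vol(M_n) = (1/2)^{binom(n,2) + o(n²)}; that is, (−log vol(M_n))/binom(n,2) → log 2 as n → ∞. -/
open MeasureTheory Filter Set

noncomputable section

/-- The edge set of the complete graph `K_n`, encoded as ordered pairs `(i,j)` with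
`i < j`. -/
def EdgeType (n : ℕ) : Type := {p : Fin n × Fin n // p.1 < p.2}

instance (n : ℕ) : Fintype (EdgeType n) := Subtype.fintype _
instance (n : ℕ) : DecidableEq (EdgeType n) := Subtype.instDecidableEq

/-- The edge `{i,j}` for distinct `i j`. -/
def edgeOf {n : ℕ} (i j : Fin n) (h : i ≠ j) : EdgeType n :=
  if hij : i < j then ⟨(i, j), hij⟩ else ⟨(j, i), (not_lt.mp hij).lt_of_ne' h⟩

/-- The value of an edge-decoration `d` on the unordered pair `{i,j}` (junk value `0`
if `i = j`). -/
def dval {n : ℕ} (d : EdgeType n → ℝ) (i j : Fin n) : ℝ :=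
  if h : i = j then 0 else d (edgeOf i j h)

/-- The metric polytope `M_n ⊆ [0,1]^{E(K_n)}`: distances in `[0,1]` satisfying all
triangle inequalities. -/
def metricPolytope (n : ℕ) : Set (EdgeType n → ℝ) :=
  {d | (∀ e, d e ∈ Set.Icc (0:ℝ) 1) ∧
    ∀ i j k : Fin n, i ≠ j → j ≠ k → i ≠ k → dval d i j ≤ dval d i k + dval d k j}

section Entropy
open Finset

set_option linter.unusedSectionVars false

variable {ι γ α β ζ : Type*} [DecidableEq γ] [DecidableEq α] [DecidableEq β] [DecidableEq ζ]

/-- The number of points of `Om` at which `F` takes the value `v`. -/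
def cnt {κ : Type*} [DecidableEq κ] (Om : Finset ι) (F : ι → κ) (v : κ) : ℝ :=
  ((Om.filter (fun w => F w = v)).card : ℝ)

lemma cnt_nonneg (Om : Finset ι) (F : ι → γ) (v : γ) : 0 ≤ cnt Om F v := by
  unfold cnt; positivity

lemma cnt_pos (Om : Finset ι) (F : ι → γ) {w : ι} (hw : w ∈ Om) : 0 < cnt Om F (F w) := by
  unfold cnt
  have : 0 < (Om.filter (fun w' => F w' = F w)).card := by
    apply Finset.card_pos.mpr
    exact ⟨w, by simp [hw]⟩
  exact_mod_cast this

lemma sum_cnt [Fintype γ] (Om : Finset ι) (F : ι → γ) (φ : γ → ℝ) :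
    ∑ w ∈ Om, φ (F w) = ∑ v, cnt Om F v * φ v := by
  rw [← Finset.sum_fiberwise Om F]
  refine Finset.sum_congr rfl fun v _ => ?_
  unfold cnt
  rw [Finset.sum_congr rfl (g := fun _ => φ v)]
  · simp
  · intro w hw
    rw [(Finset.mem_filter.mp hw).2]

lemma cnt_marg [Fintype α] (Om : Finset ι) (G : ι → γ) (X : ι → α) (g : γ) :
    ∑ x, cnt Om (fun w => (G w, X w)) (g, x) = cnt Om G g := by
  unfold cnt
  rw [← Nat.cast_sum]
  congr 1
  rw [Finset.card_eq_sum_card_fiberwise (f := X) (t := Finset.univ) (by simp)]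
  refine Finset.sum_congr rfl fun x _ => ?_
  rw [Finset.filter_filter]
  simp [Prod.ext_iff]

/-- Shannon-type inequality: conditional total correlation dominates the mass that the product
of the conditional marginals puts outside of any event that always holds. -/
lemma tc_ineq [Fintype γ] [Fintype α] [Fintype β] [Fintype ζ]
    (Om : Finset ι) (G : ι → γ) (X : ι → α) (Y : ι → β) (Z : ι → ζ)
    (T : α → β → ζ → Prop) [∀ x y z, Decidable (T x y z)]
    (hT : ∀ w ∈ Om, T (X w) (Y w) (Z w)) :
    ∑ g, cnt Om G g * (∑ x, ∑ y, ∑ z, if T x y z then 0 else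
        (cnt Om (fun w => (G w, X w)) (g, x) / cnt Om G g) *
        (cnt Om (fun w => (G w, Y w)) (g, y) / cnt Om G g) *
        (cnt Om (fun w => (G w, Z w)) (g, z) / cnt Om G g)) ≤
    ∑ w ∈ Om, (Real.log (cnt Om (fun w => (G w, X w, Y w, Z w)) (G w, X w, Y w, Z w))
      + 2 * Real.log (cnt Om G (G w))
      - Real.log (cnt Om (fun w => (G w, X w)) (G w, X w))
      - Real.log (cnt Om (fun w => (G w, Y w)) (G w, Y w))
      - Real.log (cnt Om (fun w => (G w, Z w)) (G w, Z w))) := by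
  set nV := cnt Om (fun w => (G w, X w, Y w, Z w)) with hnV
  set nG := cnt Om G with hnG
  set nX := cnt Om (fun w => (G w, X w)) with hnX
  set nY := cnt Om (fun w => (G w, Y w)) with hnY
  set nZ := cnt Om (fun w => (G w, Z w)) with hnZ
  let r : γ × α × β × ζ → ℝ := fun v =>
    nX (v.1, v.2.1) * nY (v.1, v.2.2.1) * nZ (v.1, v.2.2.2) / (nV v * nG v.1 ^ 2)
  have h1 : ∑ w ∈ Om, (1 - r (G w, X w, Y w, Z w)) ≤
      ∑ w ∈ Om, (Real.log (nV (G w, X w, Y w, Z w))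
      + 2 * Real.log (nG (G w)) - Real.log (nX (G w, X w))
      - Real.log (nY (G w, Y w)) - Real.log (nZ (G w, Z w))) := by
    refine Finset.sum_le_sum fun w hw => ?_
    have pV : 0 < nV (G w, X w, Y w, Z w) := cnt_pos Om (fun w => (G w, X w, Y w, Z w)) hw
    have pG : 0 < nG (G w) := cnt_pos Om G hw
    have pX : 0 < nX (G w, X w) := cnt_pos Om (fun w => (G w, X w)) hw
    have pY : 0 < nY (G w, Y w) := cnt_pos Om (fun w => (G w, Y w)) hw
    have pZ : 0 < nZ (G w, Z w) := cnt_pos Om (fun w => (G w, Z w)) hw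
    have hr : 0 < r (G w, X w, Y w, Z w) := by
      simp only [r]; positivity
    have hl := Real.log_le_sub_one_of_pos hr
    have he : Real.log (r (G w, X w, Y w, Z w)) =
        Real.log (nX (G w, X w)) + Real.log (nY (G w, Y w)) + Real.log (nZ (G w, Z w))
        - (Real.log (nV (G w, X w, Y w, Z w)) + 2 * Real.log (nG (G w))) := by
      simp only [r]
      rw [Real.log_div (by positivity) (by positivity), Real.log_mul (by positivity) (by positivity),
        Real.log_mul (by positivity) (by positivity), Real.log_mul (by positivity) (by positivity),
        Real.log_pow]
      push_cast; ring
    linarith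
  refine le_trans ?_ h1
  have h2 := sum_cnt Om (fun w => (G w, X w, Y w, Z w)) (fun v => 1 - r v)
  rw [h2, ← hnV]
  simp only [mul_sub, mul_one, Finset.sum_sub_distrib]
  have h3 : ∑ v, nV v = ∑ g, nG g := by
    have e1 := sum_cnt Om (fun w => (G w, X w, Y w, Z w)) (fun _ => (1:ℝ))
    have e2 := sum_cnt Om G (fun _ => (1:ℝ))
    simp only [mul_one] at e1 e2
    rw [hnV, hnG, ← e1, ← e2]
  rw [h3, Fintype.sum_prod_type, ← Finset.sum_sub_distrib]
  refine Finset.sum_le_sum fun g _ => ?_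
  simp only [Fintype.sum_prod_type]
  have mX : ∑ x, nX (g, x) = nG g := cnt_marg Om G X g
  have mY : ∑ x, nY (g, x) = nG g := cnt_marg Om G Y g
  have mZ : ∑ x, nZ (g, x) = nG g := cnt_marg Om G Z g
  have h4 : nG g = nG g * ∑ x, ∑ y, ∑ z, (nX (g, x) / nG g) * (nY (g, y) / nG g) *
      (nZ (g, z) / nG g) := by
    simp only [← Finset.mul_sum, ← Finset.sum_mul, ← Finset.sum_div, mX, mY, mZ]
    by_cases h : nG g = 0
    · simp [h]
    · field_simp
  rw [le_sub_iff_add_le]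
  conv_rhs => rw [h4]
  simp only [Finset.mul_sum, ← Finset.sum_add_distrib]
  refine Finset.sum_le_sum fun x _ => Finset.sum_le_sum fun y _ => Finset.sum_le_sum fun z _ => ?_
  have nnX : 0 ≤ nX (g, x) := cnt_nonneg _ _ _
  have nnY : 0 ≤ nY (g, y) := cnt_nonneg _ _ _
  have nnZ : 0 ≤ nZ (g, z) := cnt_nonneg _ _ _
  have nnG : 0 ≤ nG g := cnt_nonneg _ _ _
  by_cases hV : nV (g, x, y, z) = 0
  · simp only [hV, zero_mul, add_zero]
    split_ifs
    · simp; positivity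
    · exact le_rfl
  · have hex : ∃ w ∈ Om, (G w, X w, Y w, Z w) = (g, x, y, z) := by
      by_contra hne
      push Not at hne
      apply hV
      simp only [hnV, cnt]
      rw [Finset.filter_eq_empty_iff.mpr]
      · simp
      · intro w hw; exact hne w hw
    obtain ⟨w, hw, hwe⟩ := hex
    simp only [Prod.mk.injEq] at hwe
    obtain ⟨rfl, rfl, rfl, rfl⟩ := hwe
    have pG : 0 < nG (G w) := cnt_pos Om G hw
    rw [if_pos (hT w hw)]
    simp only [r]
    apply le_of_eq
    field_simp
    ring

lemma cond_ent_eq [Fintype γ] [Fintype α] (Om : Finset ι) (G : ι → γ) (X : ι → α) :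
    ∑ w ∈ Om, (Real.log (cnt Om G (G w)) - Real.log (cnt Om (fun w => (G w, X w)) (G w, X w))) =
    ∑ g, cnt Om G g * ∑ x, Real.negMulLog
      (cnt Om (fun w => (G w, X w)) (g, x) / cnt Om G g) := by
  have h2 := sum_cnt Om (fun w => (G w, X w)) (fun v => Real.log (cnt Om G v.1) -
    Real.log (cnt Om (fun w => (G w, X w)) v))
  simp only at h2
  rw [h2, Fintype.sum_prod_type]
  refine Finset.sum_congr rfl fun g _ => ?_
  rw [Finset.mul_sum]
  refine Finset.sum_congr rfl fun x _ => ?_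
  set a := cnt Om (fun w => (G w, X w)) (g, x) with ha
  have hle : a ≤ cnt Om G g := by
    rw [← cnt_marg Om G X g]
    exact Finset.single_le_sum (f := fun x => cnt Om (fun w => (G w, X w)) (g, x))
      (fun _ _ => cnt_nonneg _ _ _) (Finset.mem_univ x)
  have h0 : 0 ≤ a := cnt_nonneg _ _ _
  rcases h0.eq_or_lt with h | h
  · simp [← h]
  · have hG : 0 < cnt Om G g := lt_of_lt_of_le h hle
    rw [Real.negMulLog, Real.log_div h.ne' hG.ne']
    field_simp
    ring

/-- Entropy is at most the logarithm of the size of the support. -/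
lemma ent_le_log_card [Fintype α] (a : α → ℝ) (h0 : ∀ x, 0 ≤ a x) (h1 : ∑ x, a x = 1)
    (A : Finset α) (hA : ∀ x, x ∉ A → a x = 0) :
    ∑ x, Real.negMulLog (a x) ≤ Real.log A.card := by
  have hs : ∑ x ∈ A, a x = 1 := by
    rw [← h1]; exact Finset.sum_subset (Finset.subset_univ _) (fun x _ hx => hA x hx)
  have hne : A.Nonempty := by
    by_contra h
    rw [Finset.not_nonempty_iff_eq_empty] at h
    simp [h] at hs
  have hc : (0:ℝ) < A.card := by exact_mod_cast hne.card_pos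
  have e1 : ∑ x, Real.negMulLog (a x) = ∑ x ∈ A, Real.negMulLog (a x) := by
    symm
    exact Finset.sum_subset (Finset.subset_univ _) (fun x _ hx => by simp [hA x hx])
  have e2 : ∑ x ∈ A, (Real.negMulLog (a x) - a x * Real.log A.card) ≤
      ∑ x ∈ A, (1 / (A.card : ℝ) - a x) := by
    refine Finset.sum_le_sum fun x _ => ?_
    rcases (h0 x).eq_or_lt with h | h
    · simp [← h]
    · have hp : 0 < 1 / (a x * A.card) := by positivity
      have hl := Real.log_le_sub_one_of_pos hp
      rw [one_div, Real.log_inv, Real.log_mul h.ne' hc.ne'] at hl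
      have := mul_le_mul_of_nonneg_left hl h.le
      have e : a x * ((a x * (A.card : ℝ))⁻¹ - 1) = 1 / (A.card : ℝ) - a x := by
        field_simp
      rw [e] at this
      rw [Real.negMulLog]
      linarith
  rw [Finset.sum_sub_distrib, Finset.sum_sub_distrib, ← Finset.sum_mul, hs] at e2
  simp only [Finset.sum_const, nsmul_eq_mul] at e2
  have e3 : (A.card : ℝ) * (1 / (A.card : ℝ)) = 1 := by field_simp
  rw [e1]
  linarith

end Entropy

section Compactness
open Finset

/-- Relaxed triangle inequalities for three colours. -/
def TriOK {K : ℕ} (x y z : Fin K) : Prop :=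
  (x : ℕ) ≤ y + z + 1 ∧ (y : ℕ) ≤ x + z + 1 ∧ (z : ℕ) ≤ x + y + 1

instance {K : ℕ} (x y z : Fin K) : Decidable (TriOK x y z) := by
  unfold TriOK; infer_instance

lemma card_le_max_min {K : ℕ} (A : Finset (Fin K)) (hA : A.Nonempty) :
    A.card + (A.min' hA : ℕ) ≤ (A.max' hA : ℕ) + 1 := by
  have h : A ⊆ Finset.Icc (A.min' hA) (A.max' hA) := by
    intro x hx
    rw [Finset.mem_Icc]
    exact ⟨A.min'_le x hx, A.le_max' x hx⟩
  have h2 := Finset.card_le_card h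
  rw [Fin.card_Icc] at h2
  have h3 : (A.min' hA : ℕ) ≤ (A.max' hA : ℕ) := by
    exact_mod_cast A.min'_le _ (A.max'_mem hA)
  omega

lemma card_triple {K : ℕ} (A B C : Finset (Fin K)) (hA : A.Nonempty) (hB : B.Nonempty)
    (hC : C.Nonempty) (h : ∀ x ∈ A, ∀ y ∈ B, ∀ z ∈ C, TriOK x y z) :
    2 * (A.card + B.card + C.card) ≤ 3 * (K + 2) := by
  have a1 := card_le_max_min A hA
  have b1 := card_le_max_min B hB
  have c1 := card_le_max_min C hC
  have t1 := (h _ (A.max'_mem hA) _ (B.min'_mem hB) _ (C.min'_mem hC)).1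
  have t2 := (h _ (A.min'_mem hA) _ (B.max'_mem hB) _ (C.min'_mem hC)).2.1
  have t3 := (h _ (A.min'_mem hA) _ (B.min'_mem hB) _ (C.max'_mem hC)).2.2
  have := (A.max' hA).2
  have := (B.max' hB).2
  have := (C.max' hC).2
  omega

lemma log_card_triple {K : ℕ} (A B C : Finset (Fin K)) (hA : A.Nonempty) (hB : B.Nonempty)
    (hC : C.Nonempty) (h : ∀ x ∈ A, ∀ y ∈ B, ∀ z ∈ C, TriOK x y z) :
    Real.log A.card + Real.log B.card + Real.log C.card ≤ 3 * Real.log (((K : ℝ) + 2) / 2) := by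
  have h1 := card_triple A B C hA hB hC h
  have h2 : 2 * ((A.card : ℝ) + B.card + C.card) ≤ 3 * (K + 2) := by exact_mod_cast h1
  have key : ∀ m : ℕ, 0 < m → Real.log m ≤
      Real.log (((K : ℝ) + 2) / 2) + ((m : ℝ) / (((K : ℝ) + 2) / 2) - 1) := by
    intro m hm
    have hm' : (0:ℝ) < m := by exact_mod_cast hm
    have hp : (0:ℝ) < ((K : ℝ) + 2) / 2 := by positivity
    have := Real.log_le_sub_one_of_pos (div_pos hm' hp)
    rw [Real.log_div hm'.ne' hp.ne'] at this
    linarith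
  have ka := key _ hA.card_pos
  have kb := key _ hB.card_pos
  have kc := key _ hC.card_pos
  have hs : (A.card : ℝ) / (((K : ℝ) + 2) / 2) + (B.card : ℝ) / (((K : ℝ) + 2) / 2)
      + (C.card : ℝ) / (((K : ℝ) + 2) / 2) ≤ 3 := by
    rw [← add_div, ← add_div, div_le_iff₀ (by positivity)]
    linarith
  linarith

lemma ent_compact (K : ℕ) (ε : ℝ) (hε : 0 < ε) :
    ∃ C : ℝ, 0 ≤ C ∧ ∀ a b c : Fin K → ℝ, a ∈ stdSimplex ℝ (Fin K) → b ∈ stdSimplex ℝ (Fin K) →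
      c ∈ stdSimplex ℝ (Fin K) →
      ∑ x, Real.negMulLog (a x) + ∑ x, Real.negMulLog (b x) + ∑ x, Real.negMulLog (c x) ≤
      3 * Real.log (((K : ℝ) + 2) / 2) + ε +
        C * ∑ x, ∑ y, ∑ z, if TriOK x y z then 0 else a x * b y * c z := by
  set L := Real.log (((K : ℝ) + 2) / 2) with hL
  have hL0 : 0 ≤ L := Real.log_nonneg (by
    have : (0:ℝ) ≤ K := by positivity
    linarith)
  let Hh : (Fin K → ℝ) × (Fin K → ℝ) × (Fin K → ℝ) → ℝ := fun p =>
    ∑ x, Real.negMulLog (p.1 x) + ∑ x, Real.negMulLog (p.2.1 x) + ∑ x, Real.negMulLog (p.2.2 x)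
  let q : (Fin K → ℝ) × (Fin K → ℝ) × (Fin K → ℝ) → ℝ := fun p =>
    ∑ x, ∑ y, ∑ z, if TriOK x y z then 0 else p.1 x * p.2.1 y * p.2.2 z
  have hHc : Continuous Hh := by
    have := Real.continuous_negMulLog
    fun_prop
  have hqc : Continuous q := by
    refine continuous_finsetSum _ fun x _ => continuous_finsetSum _ fun y _ =>
      continuous_finsetSum _ fun z _ => ?_
    split_ifs
    · exact continuous_const
    · fun_prop
  let D := stdSimplex ℝ (Fin K) ×ˢ (stdSimplex ℝ (Fin K) ×ˢ stdSimplex ℝ (Fin K))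
  have hDc : IsCompact D :=
    (isCompact_stdSimplex ℝ (Fin K)).prod
      ((isCompact_stdSimplex ℝ (Fin K)).prod (isCompact_stdSimplex ℝ (Fin K)))
  let S := D ∩ {p | 3 * L + ε ≤ Hh p}
  have hSc : IsCompact S := hDc.inter_right (isClosed_le continuous_const hHc)
  have hq0 : ∀ p ∈ D, 0 ≤ q p := by
    rintro ⟨a, b, c⟩ ⟨ha, hb, hc⟩
    refine Finset.sum_nonneg fun x _ => Finset.sum_nonneg fun y _ => Finset.sum_nonneg fun z _ => ?_
    split_ifs
    · exact le_rfl
    · exact mul_nonneg (mul_nonneg (ha.1 x) (hb.1 y)) (hc.1 z)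
  have hHle : ∀ p ∈ D, Hh p ≤ 3 * Real.log K := by
    rintro ⟨a, b, c⟩ ⟨ha, hb, hc⟩
    have h1 := ent_le_log_card a ha.1 ha.2 Finset.univ (by simp)
    have h2 := ent_le_log_card b hb.1 hb.2 Finset.univ (by simp)
    have h3 := ent_le_log_card c hc.1 hc.2 Finset.univ (by simp)
    simp only [Finset.card_univ, Fintype.card_fin] at h1 h2 h3
    simp only [Hh]
    linarith
  have hlogK : 0 ≤ Real.log K := Real.log_natCast_nonneg K
  rcases S.eq_empty_or_nonempty with hS | hS
  · refine ⟨0, le_rfl, fun a b c ha hb hc => ?_⟩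
    by_contra hcon
    push Not at hcon
    have : (a, b, c) ∈ S := ⟨⟨ha, hb, hc⟩, by
      simp only [Set.mem_ofPred_eq, Hh]
      linarith⟩
    rw [hS] at this
    exact this
  · obtain ⟨p0, hp0, hmin⟩ := hSc.exists_isMinOn hS hqc.continuousOn
    have hpos : 0 < q p0 := by
      rcases (hq0 p0 hp0.1).eq_or_lt with h | h
      · exfalso
        obtain ⟨a, b, c⟩ := p0
        obtain ⟨⟨ha, hb, hc⟩, hge⟩ := hp0
        simp only at ha hb hc
        have nonneg1 : ∀ x y z, 0 ≤ (if TriOK x y z then 0 else a x * b y * c z) := by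
          intro x y z
          split_ifs
          · exact le_rfl
          · exact mul_nonneg (mul_nonneg (ha.1 x) (hb.1 y)) (hc.1 z)
        have hz : ∀ x y z, (if TriOK x y z then 0 else a x * b y * c z) = 0 := by
          intro x y z
          have e1 := (Finset.sum_eq_zero_iff_of_nonneg (fun x _ => Finset.sum_nonneg fun y _ =>
            Finset.sum_nonneg fun z _ => nonneg1 x y z)).mp h.symm x (Finset.mem_univ _)
          have e2 := (Finset.sum_eq_zero_iff_of_nonneg (fun y _ =>
            Finset.sum_nonneg fun z _ => nonneg1 x y z)).mp e1 y (Finset.mem_univ _)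
          exact (Finset.sum_eq_zero_iff_of_nonneg (fun z _ => nonneg1 x y z)).mp e2 z
            (Finset.mem_univ _)
        have supp : ∀ f : Fin K → ℝ, f ∈ stdSimplex ℝ (Fin K) →
            (Finset.univ.filter fun x => f x ≠ 0).Nonempty := by
          intro f hf
          by_contra hne
          rw [Finset.not_nonempty_iff_eq_empty, Finset.filter_eq_empty_iff] at hne
          have : ∑ x, f x = 0 := Finset.sum_eq_zero fun x hx => by simpa using hne hx
          rw [hf.2] at this
          exact one_ne_zero this
        have h1 := ent_le_log_card a ha.1 ha.2 (Finset.univ.filter fun x => a x ≠ 0) (by simp)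
        have h2 := ent_le_log_card b hb.1 hb.2 (Finset.univ.filter fun x => b x ≠ 0) (by simp)
        have h3 := ent_le_log_card c hc.1 hc.2 (Finset.univ.filter fun x => c x ≠ 0) (by simp)
        have h4 := log_card_triple _ _ _ (supp a ha) (supp b hb) (supp c hc) (by
          intro x hx y hy z hz'
          simp only [Finset.mem_filter, Finset.mem_univ, true_and] at hx hy hz'
          by_contra hT
          have := hz x y z
          rw [if_neg hT] at this
          exact (mul_ne_zero (mul_ne_zero hx hy) hz') this)
        simp only [Set.mem_ofPred_eq, Hh] at hge
        linarith
      · exact h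
    refine ⟨3 * Real.log K / q p0, by positivity, fun a b c ha hb hc => ?_⟩
    have hD : (a, b, c) ∈ D := ⟨ha, hb, hc⟩
    change Hh (a, b, c) ≤ 3 * L + ε + 3 * Real.log K / q p0 * q (a, b, c)
    by_cases hmem : 3 * L + ε ≤ Hh (a, b, c)
    · have hq : q p0 ≤ q (a, b, c) := hmin (show (a, b, c) ∈ S from ⟨hD, hmem⟩)
      have h1 : 3 * Real.log K ≤ 3 * Real.log K / q p0 * q (a, b, c) := by
        rw [div_mul_eq_mul_div, le_div_iff₀ hpos]
        exact mul_le_mul_of_nonneg_left hq (by positivity)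
      have := hHle _ hD
      linarith
    · push Not at hmem
      have : 0 ≤ 3 * Real.log K / q p0 * q (a, b, c) := mul_nonneg (by positivity) (hq0 _ hD)
      linarith

end Compactness

section EdgeEntropy
open Finset

set_option linter.unusedSectionVars false

variable {E : Type*} [Fintype E] [DecidableEq E] {K : ℕ}

/-- Number of members of `Om` agreeing with `w` on `A`. -/
def agr (Om : Finset (E → Fin K)) (A : Finset E) (w : E → Fin K) : ℝ :=
  ((Om.filter (fun w' => ∀ e ∈ A, w' e = w e)).card : ℝ)

/-- Entropy (up to the additive constant `log |Om|`) of the restriction to `A` of a uniformly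
chosen element of `Om`. -/
def ent (Om : Finset (E → Fin K)) (A : Finset E) : ℝ :=
  -(∑ w ∈ Om, Real.log (agr Om A w)) / Om.card

lemma cnt_eq_agr {κ : Type*} [DecidableEq κ] (Om : Finset (E → Fin K)) (F : (E → Fin K) → κ)
    (A : Finset E) (h : ∀ w w', F w' = F w ↔ ∀ e ∈ A, w' e = w e) (w : E → Fin K) :
    cnt Om F (F w) = agr Om A w := by
  unfold cnt agr
  congr 2
  exact Finset.filter_congr fun w' _ => h w w'

lemma agr_pos (Om : Finset (E → Fin K)) (A : Finset E) {w : E → Fin K} (hw : w ∈ Om) :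
    0 < agr Om A w := by
  unfold agr
  have : 0 < (Om.filter (fun w' => ∀ e ∈ A, w' e = w e)).card :=
    Finset.card_pos.mpr ⟨w, by simp [hw]⟩
  exact_mod_cast this

lemma finRestrict_eq (A : Finset E) (w w' : E → Fin K) :
    A.restrict w' = A.restrict w ↔ ∀ e ∈ A, w' e = w e := by
  constructor
  · intro h e he
    exact congrFun h ⟨e, he⟩
  · intro h
    funext e
    exact h e.1 e.2

lemma cnt_restrict (Om : Finset (E → Fin K)) (A : Finset E) (w : E → Fin K) :
    cnt Om A.restrict (A.restrict w) = agr Om A w :=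
  cnt_eq_agr Om _ A (fun w w' => finRestrict_eq A w w') w

lemma cnt_restrict_one (Om : Finset (E → Fin K)) (A : Finset E) (e : E) (w : E → Fin K) :
    cnt Om (fun w => (A.restrict w, w e)) (A.restrict w, w e) = agr Om (insert e A) w := by
  refine cnt_eq_agr Om (fun w => (A.restrict w, w e)) (insert e A) (fun w w' => ?_) w
  simp only [Prod.mk.injEq, finRestrict_eq, Finset.forall_mem_insert]
  tauto

lemma cnt_restrict_three (Om : Finset (E → Fin K)) (A : Finset E) (e f g : E) (w : E → Fin K) :
    cnt Om (fun w => (A.restrict w, w e, w f, w g)) (A.restrict w, w e, w f, w g) =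
      agr Om (insert e (insert f (insert g A))) w := by
  refine cnt_eq_agr Om (fun w => (A.restrict w, w e, w f, w g)) _ (fun w w' => ?_) w
  simp only [Prod.mk.injEq, finRestrict_eq, Finset.forall_mem_insert]
  tauto

lemma ent_diff (Om : Finset (E → Fin K)) (A B : Finset E) :
    ent Om A - ent Om B =
      (∑ w ∈ Om, (Real.log (agr Om B w) - Real.log (agr Om A w))) / Om.card := by
  unfold ent
  rw [Finset.sum_sub_distrib]
  ring

lemma ent_submod (Om : Finset (E → Fin K)) {A B : Finset E} (hAB : A ⊆ B) (e : E) :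
    ent Om (insert e B) - ent Om B ≤ ent Om (insert e A) - ent Om A := by
  rw [ent_diff, ent_diff]
  apply div_le_div_of_nonneg_right _ (by positivity : (0:ℝ) ≤ Om.card)
  have h := tc_ineq Om (A.restrict (π := fun _ => Fin K)) (fun w => w e)
    (B.restrict (π := fun _ => Fin K)) (fun _ => ()) (fun _ _ _ => True) (by simp)
  simp only [if_true, Finset.sum_const_zero, mul_zero] at h
  have e1 : ∀ w, cnt Om (fun w => (A.restrict w, w e, B.restrict w, ()))
      (A.restrict w, w e, B.restrict w, ()) = agr Om (insert e B) w := by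
    intro w
    refine cnt_eq_agr Om (fun w => (A.restrict w, w e, B.restrict w, ())) _ (fun w w' => ?_) w
    simp only [Prod.mk.injEq, finRestrict_eq, Finset.forall_mem_insert, and_true]
    constructor
    · rintro ⟨_, h2, h3⟩; exact ⟨h2, h3⟩
    · rintro ⟨h2, h3⟩; exact ⟨fun x hx => h3 x (hAB hx), h2, h3⟩
  have e2 : ∀ w, cnt Om (fun w => (A.restrict w, B.restrict w))
      (A.restrict w, B.restrict w) = agr Om B w := by
    intro w
    refine cnt_eq_agr Om (fun w => (A.restrict w, B.restrict w)) _ (fun w w' => ?_) w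
    simp only [Prod.mk.injEq, finRestrict_eq]
    constructor
    · rintro ⟨_, h3⟩; exact h3
    · rintro h3; exact ⟨fun x hx => h3 x (hAB hx), h3⟩
  have e3 : ∀ w, cnt Om (fun w => (A.restrict w, ()))
      (A.restrict w, ()) = agr Om A w := by
    intro w
    refine cnt_eq_agr Om (fun w => (A.restrict w, ())) _ (fun w w' => ?_) w
    simp only [Prod.mk.injEq, finRestrict_eq, and_true]
  simp only [e1, e2, e3, cnt_restrict, cnt_restrict_one] at h
  rw [← sub_nonneg, ← Finset.sum_sub_distrib]
  refine h.trans (le_of_eq (Finset.sum_congr rfl fun w _ => ?_))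
  ring

lemma simplex_of_cnt {ι γ α : Type*} [DecidableEq γ] [DecidableEq α] [Fintype α]
    (Om : Finset ι) (G : ι → γ) (X : ι → α) (g : γ) (hg : cnt Om G g ≠ 0) :
    (fun x => cnt Om (fun w => (G w, X w)) (g, x) / cnt Om G g) ∈ stdSimplex ℝ α := by
  refine ⟨fun x => div_nonneg (cnt_nonneg _ _ _) (cnt_nonneg _ _ _), ?_⟩
  rw [← Finset.sum_div, cnt_marg, div_self hg]

lemma sum_cnt_card {ι γ : Type*} [DecidableEq γ] [Fintype γ] (Om : Finset ι) (G : ι → γ) :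
    ∑ g, cnt Om G g = Om.card := by
  have e2 := sum_cnt Om G (fun _ => (1:ℝ))
  simp only [mul_one] at e2
  rw [← e2]; simp

lemma ent_cond_le (Om : Finset (E → Fin K)) (A : Finset E) (e : E) :
    ent Om (insert e A) - ent Om A ≤ Real.log K := by
  rw [ent_diff]
  apply div_le_of_le_mul₀ (by positivity) (Real.log_natCast_nonneg K)
  have h := cond_ent_eq Om (A.restrict (π := fun _ => Fin K)) (fun w => w e)
  simp only [cnt_restrict, cnt_restrict_one] at h
  rw [h, ← sum_cnt_card Om (A.restrict (π := fun _ => Fin K)), Finset.mul_sum]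
  refine Finset.sum_le_sum fun g _ => ?_
  rw [mul_comm (Real.log K)]
  by_cases hg : cnt Om (A.restrict (π := fun _ => Fin K)) g = 0
  · simp [hg]
  · refine mul_le_mul_of_nonneg_left ?_ (cnt_nonneg _ _ _)
    have hs := simplex_of_cnt Om (A.restrict (π := fun _ => Fin K)) (fun w => w e) g hg
    have := ent_le_log_card _ hs.1 hs.2 Finset.univ (by simp)
    simpa using this

lemma ent_mono_insert (Om : Finset (E → Fin K)) (A : Finset E) (e : E) :
    0 ≤ ent Om (insert e A) - ent Om A := by
  rw [ent_diff]
  refine div_nonneg (Finset.sum_nonneg fun w hw => ?_) (by positivity)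
  rw [sub_nonneg]
  apply Real.log_le_log (agr_pos Om _ hw)
  unfold agr
  have : (Om.filter (fun w' => ∀ x ∈ insert e A, w' x = w x)).card ≤
      (Om.filter (fun w' => ∀ x ∈ A, w' x = w x)).card := by
    apply Finset.card_le_card
    intro w' hw'
    simp only [Finset.mem_filter, Finset.forall_mem_insert] at hw' ⊢
    exact ⟨hw'.1, hw'.2.2⟩
  exact_mod_cast this

lemma ent_empty (Om : Finset (E → Fin K)) (h : Om.Nonempty) :
    ent Om ∅ = - Real.log Om.card := by
  have hc : (Om.card : ℝ) ≠ 0 := by exact_mod_cast h.card_pos.ne'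
  unfold ent agr
  simp
  field_simp

lemma ent_univ (Om : Finset (E → Fin K)) : ent Om Finset.univ = 0 := by
  unfold ent
  rw [Finset.sum_eq_zero]
  · simp
  · intro w hw
    have : Om.filter (fun w' => ∀ e ∈ (Finset.univ : Finset E), w' e = w e) = {w} := by
      ext w'
      simp only [Finset.mem_filter, Finset.mem_univ, true_implies, Finset.mem_singleton]
      constructor
      · rintro ⟨_, h⟩; exact funext h
      · rintro rfl; exact ⟨hw, fun _ => rfl⟩
    simp only [agr, this]
    simp

lemma ent_chain (Om : Finset (E → Fin K)) (B D : Finset E) (h : ℝ)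
    (hD : ∀ e ∈ D, ent Om (insert e B) - ent Om B ≤ h) :
    ent Om (B ∪ D) ≤ ent Om B + D.card * h := by
  induction D using Finset.induction_on with
  | empty => simp
  | insert e D he ih =>
    have ih' := ih fun x hx => hD x (Finset.mem_insert_of_mem hx)
    have h1 := hD e (Finset.mem_insert_self _ _)
    have h2 := ent_submod Om (Finset.subset_union_left : B ⊆ B ∪ D) e
    rw [Finset.union_insert, Finset.card_insert_of_notMem he]
    push_cast
    linarith

lemma ent_tri (Om : Finset (E → Fin K)) (hOm : Om.Nonempty) (ε C : ℝ) (hC0 : 0 ≤ C)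
    (hC : ∀ a b c : Fin K → ℝ, a ∈ stdSimplex ℝ (Fin K) → b ∈ stdSimplex ℝ (Fin K) →
      c ∈ stdSimplex ℝ (Fin K) →
      ∑ x, Real.negMulLog (a x) + ∑ x, Real.negMulLog (b x) + ∑ x, Real.negMulLog (c x) ≤
      3 * Real.log (((K : ℝ) + 2) / 2) + ε +
        C * ∑ x, ∑ y, ∑ z, if TriOK x y z then 0 else a x * b y * c z)
    (A : Finset E) (e f g : E) (hT : ∀ w ∈ Om, TriOK (w e) (w f) (w g)) :
    (ent Om (insert e A) - ent Om A) + (ent Om (insert f A) - ent Om A) +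
      (ent Om (insert g A) - ent Om A) ≤ 3 * Real.log (((K : ℝ) + 2) / 2) + ε +
      C * ((ent Om (insert e A) - ent Om A) + (ent Om (insert f A) - ent Om A) +
      (ent Om (insert g A) - ent Om A) -
        (ent Om (insert e (insert f (insert g A))) - ent Om A)) := by
  have hN : (0:ℝ) < Om.card := by exact_mod_cast hOm.card_pos
  set G := (A.restrict (π := fun _ => Fin K)) with hG
  have h := tc_ineq Om G (fun w => w e) (fun w => w f) (fun w => w g) TriOK hT
  have he := cond_ent_eq Om G (fun w => w e)
  have hf := cond_ent_eq Om G (fun w => w f)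
  have hg := cond_ent_eq Om G (fun w => w g)
  have hNs := sum_cnt_card Om G
  have key : ∑ v, cnt Om G v * (
      ∑ x, Real.negMulLog (cnt Om (fun w => (G w, w e)) (v, x) / cnt Om G v) +
      ∑ x, Real.negMulLog (cnt Om (fun w => (G w, w f)) (v, x) / cnt Om G v) +
      ∑ x, Real.negMulLog (cnt Om (fun w => (G w, w g)) (v, x) / cnt Om G v)) ≤
      ∑ v, cnt Om G v * (3 * Real.log (((K : ℝ) + 2) / 2) + ε + C *
        ∑ x, ∑ y, ∑ z, if TriOK x y z then 0 else
        (cnt Om (fun w => (G w, w e)) (v, x) / cnt Om G v) *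
        (cnt Om (fun w => (G w, w f)) (v, y) / cnt Om G v) *
        (cnt Om (fun w => (G w, w g)) (v, z) / cnt Om G v)) := by
    refine Finset.sum_le_sum fun v _ => ?_
    by_cases hv : cnt Om G v = 0
    · simp [hv]
    · refine mul_le_mul_of_nonneg_left ?_ (cnt_nonneg _ _ _)
      exact hC _ _ _ (simplex_of_cnt Om G (fun w => w e) v hv)
        (simplex_of_cnt Om G (fun w => w f) v hv) (simplex_of_cnt Om G (fun w => w g) v hv)
  simp only [mul_add, Finset.sum_add_distrib] at key
  rw [← he, ← hf, ← hg, ← Finset.sum_mul, ← Finset.sum_mul, hNs] at key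
  simp only [mul_left_comm _ C] at key
  rw [← Finset.mul_sum] at key
  have key2 := key.trans (add_le_add_right (mul_le_mul_of_nonneg_left h hC0) _)
  simp only [hG, cnt_restrict, cnt_restrict_one, cnt_restrict_three] at key2
  simp only [ent]
  simp only [Finset.sum_add_distrib, Finset.sum_sub_distrib, ← Finset.mul_sum] at key2
  generalize (∑ w ∈ Om, Real.log (agr Om A w)) = sA at *
  generalize (∑ w ∈ Om, Real.log (agr Om (insert e A) w)) = se at *
  generalize (∑ w ∈ Om, Real.log (agr Om (insert f A) w)) = sf at *
  generalize (∑ w ∈ Om, Real.log (agr Om (insert g A) w)) = sg at *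
  generalize (∑ w ∈ Om, Real.log (agr Om (insert e (insert f (insert g A))) w)) = sV at *
  have e1 : (-se / (Om.card : ℝ) - -sA / Om.card) + (-sf / Om.card - -sA / Om.card) +
      (-sg / Om.card - -sA / Om.card) = ((sA - se) + (sA - sf) + (sA - sg)) / Om.card := by
    field_simp; ring
  have e2 : ((sA - se) + (sA - sf) + (sA - sg)) / Om.card - (-sV / (Om.card : ℝ) - -sA / Om.card)
     = (sV + 2 * sA - se - sf - sg) / Om.card := by
    field_simp; ring
  rw [e1, e2, div_le_iff₀ hN]
  have e3 : (3 * Real.log (((K : ℝ) + 2) / 2) + ε + C * ((sV + 2 * sA - se - sf - sg) / Om.card))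
     * Om.card = (3 * Real.log (((K : ℝ) + 2) / 2) + ε) * Om.card +
      C * (sV + 2 * sA - se - sf - sg) := by
    field_simp
  rw [e3]
  linarith

lemma ent_perm (Om : Finset (E → Fin K)) (σ : Equiv.Perm E)
    (hσ : ∀ w, w ∈ Om ↔ w ∘ σ ∈ Om) (A : Finset E) :
    ent Om (A.map σ.toEmbedding) = ent Om A := by
  have h1 : ∀ w, agr Om (A.map σ.toEmbedding) w = agr Om A (w ∘ σ) := by
    intro w
    unfold agr
    congr 1
    refine Finset.card_bij (fun w' _ => w' ∘ σ) ?_ ?_ ?_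
    · intro w' hw'
      simp only [Finset.mem_filter, Finset.forall_mem_map] at hw' ⊢
      exact ⟨(hσ w').mp hw'.1, hw'.2⟩
    · intro a _ b _ hab
      exact σ.surjective.injective_comp_right hab
    · intro b hb
      refine ⟨b ∘ σ.symm, ?_, ?_⟩
      · simp only [Finset.mem_filter, Finset.forall_mem_map] at hb ⊢
        refine ⟨(hσ _).mpr ?_, ?_⟩
        · have : (b ∘ σ.symm) ∘ σ = b := by funext x; simp
          rw [this]; exact hb.1
        · intro x hx
          simpa using hb.2 x hx
      · funext x; simp
  unfold ent
  congr 2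
  refine Finset.sum_bij (fun w _ => w ∘ σ) ?_ ?_ ?_ ?_
  · intro w hw; exact (hσ w).mp hw
  · intro a _ b _ hab
    exact σ.surjective.injective_comp_right hab
  · intro b hb
    have : (b ∘ σ.symm) ∘ σ = b := by funext x; simp
    exact ⟨b ∘ σ.symm, (hσ _).mpr (by rw [this]; exact hb), this⟩
  · intro w _
    rw [h1]

end EdgeEntropy

section Graph
open Finset

lemma edgeOf_pos {n : ℕ} (i j : Fin n) (h : i ≠ j) (hij : i < j) :
    edgeOf i j h = ⟨(i, j), hij⟩ := dif_pos hij

lemma edgeOf_neg {n : ℕ} (i j : Fin n) (h : i ≠ j) (hij : j < i) :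
    edgeOf i j h = ⟨(j, i), hij⟩ := dif_neg (not_lt.mpr hij.le)

lemma edgeOf_comm {n : ℕ} (i j : Fin n) (h : i ≠ j) : edgeOf i j h = edgeOf j i h.symm := by
  rcases lt_or_gt_of_ne h with h1 | h1
  · rw [edgeOf_pos i j h h1, edgeOf_neg j i h.symm h1]
  · rw [edgeOf_neg i j h h1, edgeOf_pos j i h.symm h1]

lemma edgeOf_self {n : ℕ} (e : EdgeType n) : edgeOf e.1.1 e.1.2 e.2.ne = e :=
  edgeOf_pos _ _ _ e.2

lemma edge_cases {n : ℕ} (e : EdgeType n) : ∃ i j, ∃ h : i ≠ j, e = edgeOf i j h :=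
  ⟨e.1.1, e.1.2, e.2.ne, (edgeOf_self e).symm⟩

/-- Property of both endpoints. -/
lemma edgeOf_ends {n : ℕ} (i j : Fin n) (h : i ≠ j) :
    ((edgeOf i j h).1.1 = i ∧ (edgeOf i j h).1.2 = j) ∨
    ((edgeOf i j h).1.1 = j ∧ (edgeOf i j h).1.2 = i) := by
  rcases lt_or_gt_of_ne h with h1 | h1
  · rw [edgeOf_pos i j h h1]; exact Or.inl ⟨rfl, rfl⟩
  · rw [edgeOf_neg i j h h1]; exact Or.inr ⟨rfl, rfl⟩

lemma edgeOf_inj {n : ℕ} {i j a b : Fin n} (h : i ≠ j) (h' : a ≠ b) :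
    edgeOf i j h = edgeOf a b h' ↔ (i = a ∧ j = b) ∨ (i = b ∧ j = a) := by
  constructor
  · intro he
    have h1 := edgeOf_ends i j h
    have h2 := edgeOf_ends a b h'
    rw [he] at h1
    rcases h1 with ⟨x, y⟩ | ⟨x, y⟩ <;> rcases h2 with ⟨z, t⟩ | ⟨z, t⟩ <;>
      simp_all
  · rintro (⟨rfl, rfl⟩ | ⟨rfl, rfl⟩)
    · rfl
    · exact edgeOf_comm _ _ _

/-- Action of a vertex map on edges. -/
def edgeMap {n : ℕ} (τ : Equiv.Perm (Fin n)) (e : EdgeType n) : EdgeType n :=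
  edgeOf (τ e.1.1) (τ e.1.2) (τ.injective.ne e.2.ne)

lemma edgeMap_edgeOf {n : ℕ} (τ : Equiv.Perm (Fin n)) (i j : Fin n) (h : i ≠ j) :
    edgeMap τ (edgeOf i j h) = edgeOf (τ i) (τ j) (τ.injective.ne h) := by
  unfold edgeMap
  rw [edgeOf_inj]
  rcases edgeOf_ends i j h with ⟨x, y⟩ | ⟨x, y⟩
  · left; rw [x, y]; exact ⟨rfl, rfl⟩
  · right; rw [x, y]; exact ⟨rfl, rfl⟩

/-- The permutation of edges induced by a permutation of vertices. -/
def edgePerm {n : ℕ} (τ : Equiv.Perm (Fin n)) : Equiv.Perm (EdgeType n) where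
  toFun := edgeMap τ
  invFun := edgeMap τ.symm
  left_inv := by
    intro e
    obtain ⟨i, j, h, rfl⟩ := edge_cases e
    simp [edgeMap_edgeOf]
  right_inv := by
    intro e
    obtain ⟨i, j, h, rfl⟩ := edge_cases e
    simp [edgeMap_edgeOf]

lemma edgePerm_edgeOf {n : ℕ} (τ : Equiv.Perm (Fin n)) (i j : Fin n) (h : i ≠ j) :
    edgePerm τ (edgeOf i j h) = edgeOf (τ i) (τ j) (τ.injective.ne h) :=
  edgeMap_edgeOf τ i j h

/-- Colourings satisfying the relaxed triangle inequalities. -/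
def Cols (n K : ℕ) : Finset (EdgeType n → Fin K) :=
  Finset.univ.filter fun w => ∀ (i j l : Fin n) (hij : i ≠ j) (hjl : j ≠ l) (hil : i ≠ l),
    (w (edgeOf i j hij) : ℕ) ≤ w (edgeOf i l hil) + w (edgeOf j l hjl) + 1

lemma mem_Cols {n K : ℕ} (w : EdgeType n → Fin K) : w ∈ Cols n K ↔
    ∀ (i j l : Fin n) (hij : i ≠ j) (hjl : j ≠ l) (hil : i ≠ l),
    (w (edgeOf i j hij) : ℕ) ≤ w (edgeOf i l hil) + w (edgeOf j l hjl) + 1 := by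
  simp [Cols]

lemma Cols_tri {n K : ℕ} {w : EdgeType n → Fin K} (hw : w ∈ Cols n K) {u p q : Fin n}
    (hpq : p ≠ q) (hup : u ≠ p) (huq : u ≠ q) :
    TriOK (w (edgeOf p q hpq)) (w (edgeOf u p hup)) (w (edgeOf u q huq)) := by
  rw [mem_Cols] at hw
  have h1 := hw p q u hpq huq.symm hup.symm
  have h2 := hw u p q hup hpq huq
  have h3 := hw u q p huq hpq.symm hup
  rw [edgeOf_comm p u, edgeOf_comm q u] at h1
  rw [edgeOf_comm q p] at h3
  refine ⟨?_, ?_, ?_⟩ <;> omega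

lemma Cols_perm_aux {n K : ℕ} (τ : Equiv.Perm (Fin n)) {w : EdgeType n → Fin K}
    (hw : w ∈ Cols n K) : w ∘ edgePerm τ ∈ Cols n K := by
  rw [mem_Cols] at hw ⊢
  intro i j l hij hjl hil
  simp only [Function.comp, edgePerm_edgeOf]
  exact hw _ _ _ _ _ _

lemma Cols_perm {n K : ℕ} (τ : Equiv.Perm (Fin n)) (w : EdgeType n → Fin K) :
    w ∈ Cols n K ↔ w ∘ edgePerm τ ∈ Cols n K := by
  refine ⟨Cols_perm_aux τ, fun h => ?_⟩
  have h2 := Cols_perm_aux τ.symm h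
  have : (w ∘ edgePerm τ) ∘ edgePerm τ.symm = w := by
    funext e
    obtain ⟨i, j, h, rfl⟩ := edge_cases e
    simp [edgePerm_edgeOf]
  rwa [this] at h2

/-- Edges inside a vertex set. -/
def ES {n : ℕ} (V : Finset (Fin n)) : Finset (EdgeType n) :=
  Finset.univ.filter fun e => e.1.1 ∈ V ∧ e.1.2 ∈ V

lemma mem_ES {n : ℕ} (V : Finset (Fin n)) (i j : Fin n) (h : i ≠ j) :
    edgeOf i j h ∈ ES V ↔ i ∈ V ∧ j ∈ V := by
  simp only [ES, Finset.mem_filter, Finset.mem_univ, true_and]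
  rcases edgeOf_ends i j h with ⟨x, y⟩ | ⟨x, y⟩ <;> rw [x, y]
  exact and_comm

lemma ES_map {n : ℕ} (V : Finset (Fin n)) (τ : Equiv.Perm (Fin n)) :
    (ES V).map (edgePerm τ).toEmbedding = ES (V.map τ.toEmbedding) := by
  ext e
  obtain ⟨e, rfl⟩ := (edgePerm τ).surjective e
  obtain ⟨i, j, h, rfl⟩ := edge_cases e
  rw [edgePerm_edgeOf, mem_ES]
  rw [← edgePerm_edgeOf τ i j h]
  have : edgePerm τ (edgeOf i j h) = (edgePerm τ).toEmbedding (edgeOf i j h) := rfl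
  rw [this, Finset.mem_map' , mem_ES]
  simp

/-- Conditional entropy of the edge `ij` given all other edges inside `V ∪ {i,j}`. -/
def hc {n : ℕ} (K : ℕ) (V : Finset (Fin n)) (i j : Fin n) (h : i ≠ j) : ℝ :=
  ent (Cols n K) (ES (insert i (insert j V))) -
    ent (Cols n K) ((ES (insert i (insert j V))).erase (edgeOf i j h))

lemma hc_comm {n : ℕ} (K : ℕ) (V : Finset (Fin n)) (i j : Fin n) (h : i ≠ j) :
    hc K V i j h = hc K V j i h.symm := by
  unfold hc
  rw [Finset.insert_comm, edgeOf_comm]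

lemma hc_perm {n : ℕ} (K : ℕ) (V : Finset (Fin n)) (i j : Fin n) (h : i ≠ j)
    (τ : Equiv.Perm (Fin n)) :
    hc K (V.map τ.toEmbedding) (τ i) (τ j) (τ.injective.ne h) = hc K V i j h := by
  unfold hc
  have h1 : insert (τ i) (insert (τ j) (V.map τ.toEmbedding)) =
      (insert i (insert j V)).map τ.toEmbedding := by
    simp [Finset.map_insert]
  rw [h1, ← ES_map, ent_perm _ _ (Cols_perm τ), ← edgePerm_edgeOf τ i j h]
  have h2 : ((ES (insert i (insert j V))).map (edgePerm τ).toEmbedding).erase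
      (edgePerm τ (edgeOf i j h)) =
      ((ES (insert i (insert j V))).erase (edgeOf i j h)).map (edgePerm τ).toEmbedding := by
    rw [Finset.map_erase]; rfl
  rw [h2, ent_perm _ _ (Cols_perm τ)]

lemma map_swap_fix {n : ℕ} (V : Finset (Fin n)) (a b : Fin n) (ha : a ∉ V) (hb : b ∉ V) :
    V.map (Equiv.swap a b).toEmbedding = V := by
  have h : ∀ x ∈ V, Equiv.swap a b x = x := by
    intro x hx
    exact Equiv.swap_apply_of_ne_of_ne (fun h => ha (h ▸ hx)) (fun h => hb (h ▸ hx))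
  ext x
  simp only [Finset.mem_map, Equiv.coe_toEmbedding]
  constructor
  · rintro ⟨y, hy, rfl⟩
    rw [h y hy]; exact hy
  · intro hx
    exact ⟨x, hx, h x hx⟩

lemma hc_move {n : ℕ} (K : ℕ) (V : Finset (Fin n)) (i j k : Fin n) (hij : i ≠ j) (hkj : k ≠ j)
    (hi : i ∉ V) (hk : k ∉ V) : hc K V i j hij = hc K V k j hkj := by
  have h := hc_perm K V i j hij (Equiv.swap i k)
  rw [map_swap_fix V i k hi hk] at h
  rw [← h]
  congr 1
  · simp
  · exact Equiv.swap_apply_of_ne_of_ne hij.symm hkj.symm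

lemma hc_eq {n : ℕ} (K : ℕ) (V : Finset (Fin n)) (i j a b : Fin n) (hij : i ≠ j) (hab : a ≠ b)
    (hi : i ∉ V) (hj : j ∉ V) (ha : a ∉ V) (hb : b ∉ V) :
    hc K V i j hij = hc K V a b hab := by
  by_cases haj : a = j
  · subst haj
    rw [hc_comm K V a b, ← hc_move K V i a b hij hab.symm hi hb]
  · rw [hc_move K V i j a hij haj hi ha, hc_comm, hc_move K V j a b (Ne.symm haj) hab.symm hj hb,
      hc_comm]

lemma hc_rot {n : ℕ} (K : ℕ) (V : Finset (Fin n)) (u p q : Fin n) (hpq : p ≠ q) (hup : u ≠ p)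
    (huq : u ≠ q) (hu : u ∉ V) (hp : p ∉ V) :
    hc K (insert p V) u q huq = hc K (insert u V) p q hpq := by
  have h := hc_perm K (insert p V) u q huq (Equiv.swap u p)
  rw [← h, Finset.map_insert, map_swap_fix V u p hu hp]
  congr 1
  · simp
  · simp
  · exact Equiv.swap_apply_of_ne_of_ne huq.symm hpq.symm

lemma sub_of_edge {n : ℕ} (A B : Finset (EdgeType n))
    (h : ∀ i j, ∀ hij : i ≠ j, edgeOf i j hij ∈ A → edgeOf i j hij ∈ B) : A ⊆ B := by
  intro e he
  obtain ⟨i, j, hij, rfl⟩ := edge_cases e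
  exact h i j hij he

lemma ins_rot {n : ℕ} (V : Finset (Fin n)) (u p q : Fin n) :
    insert p (insert q (insert u V)) = insert u (insert p (insert q V)) := by
  rw [Finset.insert_comm q u, Finset.insert_comm p u]

lemma tri_step {n K : ℕ} (hne : (Cols n K).Nonempty) (ε C : ℝ) (hC0 : 0 ≤ C)
    (hC : ∀ a b c : Fin K → ℝ, a ∈ stdSimplex ℝ (Fin K) → b ∈ stdSimplex ℝ (Fin K) →
      c ∈ stdSimplex ℝ (Fin K) →
      ∑ x, Real.negMulLog (a x) + ∑ x, Real.negMulLog (b x) + ∑ x, Real.negMulLog (c x) ≤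
      3 * Real.log (((K : ℝ) + 2) / 2) + ε +
        C * ∑ x, ∑ y, ∑ z, if TriOK x y z then 0 else a x * b y * c z)
    (V : Finset (Fin n)) (u p q : Fin n) (hpq : p ≠ q) (hup : u ≠ p)
    (huq : u ≠ q) (hu : u ∉ V) (hp : p ∉ V) (hq : q ∉ V) :
    3 * hc K (insert u V) p q hpq ≤ 3 * Real.log (((K : ℝ) + 2) / 2) + ε +
      C * (3 * (hc K V p q hpq - hc K (insert u V) p q hpq)) := by
  set W := insert u (insert p (insert q V)) with hW
  set e := edgeOf p q hpq with he
  set f := edgeOf u p hup with hf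
  set g := edgeOf u q huq with hg
  have hef : e ≠ f := by
    intro h; rw [he, hf, edgeOf_inj] at h
    rcases h with ⟨h1, _⟩ | ⟨_, h2⟩
    · exact hup h1.symm
    · exact huq h2.symm
  have heg : e ≠ g := by
    intro h; rw [he, hg, edgeOf_inj] at h
    rcases h with ⟨h1, _⟩ | ⟨h1, _⟩
    · exact hup h1.symm
    · exact hpq h1
  have hfg : f ≠ g := by
    intro h; rw [hf, hg, edgeOf_inj] at h
    rcases h with ⟨_, h1⟩ | ⟨h1, _⟩
    · exact hpq h1
    · exact huq h1
  have heW : e ∈ ES W := by rw [he, mem_ES]; simp [hW]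
  have hfW : f ∈ ES W := by rw [hf, mem_ES]; simp [hW]
  have hgW : g ∈ ES W := by rw [hg, mem_ES]; simp [hW]
  set A := ((ES W).erase e).erase f |>.erase g with hA
  have hfull : insert e (insert f (insert g A)) = ES W := by
    ext x
    simp only [hA, Finset.mem_insert, Finset.mem_erase]
    constructor
    · rintro (rfl | rfl | rfl | h)
      · exact heW
      · exact hfW
      · exact hgW
      · exact h.2.2.2
    · intro h
      by_cases h1 : x = e
      · exact Or.inl h1
      by_cases h2 : x = f
      · exact Or.inr (Or.inl h2)
      by_cases h3 : x = g
      · exact Or.inr (Or.inr (Or.inl h3))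
      exact Or.inr (Or.inr (Or.inr ⟨h3, h2, h1, h⟩))
  -- the values with one more vertex
  have t1 : hc K (insert u V) p q hpq = ent (Cols n K) (ES W) - ent (Cols n K) ((ES W).erase e) := by
    unfold hc
    have : insert p (insert q (insert u V)) = W := ins_rot V u p q
    rw [this]
  have t2 : hc K (insert u V) p q hpq = ent (Cols n K) (ES W) - ent (Cols n K) ((ES W).erase f) := by
    have h1 := hc_rot K V u q p hpq.symm huq hup hu hq
    rw [hc_comm K (insert u V) p q, ← h1]
    unfold hc
    have : insert u (insert p (insert q V)) = W := hW.symm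
    rw [this]
  have t3 : hc K (insert u V) p q hpq = ent (Cols n K) (ES W) - ent (Cols n K) ((ES W).erase g) := by
    have h1 := hc_rot K V u p q hpq hup huq hu hp
    rw [← h1]
    unfold hc
    have : insert u (insert q (insert p V)) = W := by
      rw [hW, Finset.insert_comm q p]
    rw [this]
  -- upper bounds
  have up : ∀ (i j : Fin n) (hij : i ≠ j), i ∉ V → j ∉ V → i ∈ W → j ∈ W →
      (∀ x ∈ ES (insert i (insert j V)), x ≠ edgeOf i j hij → x ≠ e ∧ x ≠ f ∧ x ≠ g) →
      ent (Cols n K) (insert (edgeOf i j hij) A) - ent (Cols n K) A ≤ hc K V p q hpq := by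
    intro i j hij hi hj hiW hjW hx
    rw [← hc_eq K V i j p q hij hpq hi hj hp hq]
    have hmem : edgeOf i j hij ∈ ES (insert i (insert j V)) := by
      rw [mem_ES]; simp
    have hs : (ES (insert i (insert j V))).erase (edgeOf i j hij) ⊆ A := by
      intro x hx'
      rw [Finset.mem_erase] at hx'
      have h3 := hx x hx'.2 hx'.1
      simp only [hA, Finset.mem_erase]
      refine ⟨h3.2.2, h3.2.1, h3.1, ?_⟩
      have hxE := hx'.2
      obtain ⟨a, b, hab, rfl⟩ := edge_cases x
      rw [mem_ES] at hxE ⊢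
      have hsub : insert i (insert j V) ⊆ W := by
        intro y hy
        simp only [Finset.mem_insert] at hy
        rcases hy with rfl | rfl | hy
        · exact hiW
        · exact hjW
        · simp [hW, hy]
      exact ⟨hsub hxE.1, hsub hxE.2⟩
    have := ent_submod (Cols n K) hs (edgeOf i j hij)
    rw [Finset.insert_erase hmem] at this
    exact this
  have ua := up p q hpq hp hq (by simp [hW]) (by simp [hW]) (by
    intro x hx hxe
    refine ⟨hxe, ?_, ?_⟩
    · rintro rfl; rw [hf, mem_ES] at hx; simp [hup, huq, hu] at hx
    · rintro rfl; rw [hg, mem_ES] at hx; simp [hup, huq, hu] at hx)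
  have ub := up u p hup hu hp (by simp [hW]) (by simp [hW]) (by
    intro x hx hxe
    refine ⟨?_, hxe, ?_⟩
    · rintro rfl; rw [he, mem_ES] at hx; simp [hpq.symm, huq.symm, hq] at hx
    · rintro rfl; rw [hg, mem_ES] at hx; simp [hpq.symm, huq.symm, hq] at hx)
  have uc := up u q huq hu hq (by simp [hW]) (by simp [hW]) (by
    intro x hx hxe
    refine ⟨?_, ?_, hxe⟩
    · rintro rfl; rw [he, mem_ES] at hx; simp [hpq, hup.symm, hp] at hx
    · rintro rfl; rw [hf, mem_ES] at hx; simp [hpq, hup.symm, hp] at hx)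
  rw [← he] at ua
  rw [← hf] at ub
  rw [← hg] at uc
  -- lower bounds
  have low : ∀ (x : EdgeType n) (B : Finset (EdgeType n)), x ∈ ES W → B ⊆ (ES W).erase x →
      ent (Cols n K) (ES W) - ent (Cols n K) ((ES W).erase x) ≤
      ent (Cols n K) (insert x B) - ent (Cols n K) B := by
    intro x B hx hB
    have := ent_submod (Cols n K) hB x
    rwa [Finset.insert_erase hx] at this
  have la := low e A heW (by
    intro x hx; simp only [hA, Finset.mem_erase] at hx ⊢; exact ⟨hx.2.2.1, hx.2.2.2⟩)
  have lb := low f A hfW (by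
    intro x hx; simp only [hA, Finset.mem_erase] at hx ⊢; exact ⟨hx.2.1, hx.2.2.2⟩)
  have lc := low g A hgW (by
    intro x hx; simp only [hA, Finset.mem_erase] at hx ⊢; exact ⟨hx.1, hx.2.2.2⟩)
  have lb' := low f (insert g A) hfW (by
    intro x hx
    simp only [hA, Finset.mem_erase, Finset.mem_insert] at hx ⊢
    rcases hx with rfl | hx
    · exact ⟨hfg.symm, hgW⟩
    · exact ⟨hx.2.1, hx.2.2.2⟩)
  have la' := low e (insert f (insert g A)) heW (by
    intro x hx
    simp only [hA, Finset.mem_erase, Finset.mem_insert] at hx ⊢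
    rcases hx with rfl | rfl | hx
    · exact ⟨hef.symm, hfW⟩
    · exact ⟨heg.symm, hgW⟩
    · exact ⟨hx.2.2.1, hx.2.2.2⟩)
  have main := ent_tri (Cols n K) hne ε C hC0 hC A e f g
    (fun w hw => Cols_tri hw hpq hup huq)
  rw [← t1] at la la'
  rw [← t2] at lb lb'
  rw [← t3] at lc
  have hTC : (ent (Cols n K) (insert e A) - ent (Cols n K) A) +
      (ent (Cols n K) (insert f A) - ent (Cols n K) A) +
      (ent (Cols n K) (insert g A) - ent (Cols n K) A) -
        (ent (Cols n K) (insert e (insert f (insert g A))) - ent (Cols n K) A) ≤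
      3 * (hc K V p q hpq - hc K (insert u V) p q hpq) := by
    linarith
  have := mul_le_mul_of_nonneg_left hTC hC0
  linarith

end Graph

section Count
open Finset

lemma card_EdgeType (n : ℕ) : Fintype.card (EdgeType n) = n.choose 2 := by
  have h1 : Fintype.card (EdgeType n) =
      (Finset.univ.filter fun p : Fin n × Fin n => p.1 < p.2).card :=
    Fintype.card_subtype _
  rw [h1, Finset.card_filter, Fintype.sum_prod_type_right]
  have h2 : ∀ j : Fin n, (∑ i : Fin n, if i < j then 1 else 0) = (j : ℕ) := by
    intro j
    rw [← Finset.card_filter]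
    have : (Finset.univ.filter fun i : Fin n => i < j) = Finset.Iio j := by
      ext; simp
    rw [this, Fin.card_Iio]
  simp only [h2]
  rw [Fin.sum_univ_eq_sum_range (fun i => i) n, Finset.sum_range_id, Nat.choose_two_right]

lemma Cols_nonempty (n k : ℕ) : (Cols n (k + 1)).Nonempty :=
  ⟨fun _ => 0, by rw [mem_Cols]; intros; simp⟩

/-- The chain rule bound. -/
lemma chain_bound {n K : ℕ} (hne : (Cols n K).Nonempty) (S : Finset (Fin n)) (h : ℝ) (h0 : 0 ≤ h)
    (hS : ∀ i j : Fin n, ∀ hij : i ≠ j, i ∉ S → j ∉ S → hc K S i j hij ≤ h) :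
    Real.log (Cols n K).card ≤ 2 * S.card * n * Real.log K + (n.choose 2 : ℝ) * h := by
  set B : Finset (EdgeType n) := Finset.univ.filter fun e => e.1.1 ∈ S ∨ e.1.2 ∈ S with hB
  have memB : ∀ i j : Fin n, ∀ hij : i ≠ j, edgeOf i j hij ∈ B ↔ i ∈ S ∨ j ∈ S := by
    intro i j hij
    simp only [hB, Finset.mem_filter, Finset.mem_univ, true_and]
    rcases edgeOf_ends i j hij with ⟨x, y⟩ | ⟨x, y⟩ <;> rw [x, y]
    exact or_comm
  have c1 := ent_chain (Cols n K) ∅ B (Real.log K) (fun e _ => ent_cond_le _ _ _)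
  have c2 := ent_chain (Cols n K) B Bᶜ h (by
    intro e he
    obtain ⟨i, j, hij, rfl⟩ := edge_cases e
    rw [Finset.mem_compl, memB] at he
    push Not at he
    refine le_trans ?_ (hS i j hij he.1 he.2)
    have hmem : edgeOf i j hij ∈ ES (insert i (insert j S)) := by
      rw [mem_ES]; simp
    have hs : (ES (insert i (insert j S))).erase (edgeOf i j hij) ⊆ B := by
      apply sub_of_edge
      intro a b hab hm
      rw [Finset.mem_erase, mem_ES, Ne, edgeOf_inj] at hm
      rw [memB]
      simp only [Finset.mem_insert] at hm
      obtain ⟨h1, h2, h3⟩ := hm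
      by_contra hcon
      push Not at hcon
      rcases h2 with rfl | rfl | h2
      · rcases h3 with rfl | rfl | h3
        · exact hab rfl
        · exact h1 (Or.inl ⟨rfl, rfl⟩)
        · exact hcon.2 h3
      · rcases h3 with rfl | rfl | h3
        · exact h1 (Or.inr ⟨rfl, rfl⟩)
        · exact hab rfl
        · exact hcon.2 h3
      · exact hcon.1 h2
    have := ent_submod (Cols n K) hs (edgeOf i j hij)
    rw [Finset.insert_erase hmem] at this
    exact this)
  rw [Finset.empty_union, ent_empty _ hne] at c1
  rw [Finset.union_compl, ent_univ] at c2
  have hBc : B.card ≤ 2 * S.card * n := by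
    have h1 : B.card ≤ ((S ×ˢ (Finset.univ : Finset (Fin n))) ∪
        ((Finset.univ : Finset (Fin n)) ×ˢ S)).card := by
      refine Finset.card_le_card_of_injOn (fun e => e.1) ?_ ?_
      · intro e he
        have he' : e.1.1 ∈ S ∨ e.1.2 ∈ S := by
          simpa [hB] using he
        simpa using he'
      · intro a _ b _ hab
        exact Subtype.ext hab
    have h2 := h1.trans (Finset.card_union_le _ _)
    rw [Finset.card_product, Finset.card_product, Finset.card_univ, Fintype.card_fin] at h2
    linarith [mul_comm n S.card]
  have hBc' : (B.card : ℝ) ≤ 2 * S.card * n := by exact_mod_cast hBc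
  have hDc : Bᶜ.card ≤ n.choose 2 := by
    rw [← card_EdgeType, ← Finset.card_univ]
    exact Finset.card_le_card (Finset.subset_univ _)
  have hDc' : (Bᶜ.card : ℝ) ≤ n.choose 2 := by exact_mod_cast hDc
  have m1 := mul_le_mul_of_nonneg_right hBc' (Real.log_natCast_nonneg K)
  have m2 := mul_le_mul_of_nonneg_right hDc' h0
  linarith

lemma hc_nonneg {n K : ℕ} (V : Finset (Fin n)) (i j : Fin n) (h : i ≠ j) : 0 ≤ hc K V i j h := by
  have hmem : edgeOf i j h ∈ ES (insert i (insert j V)) := by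
    rw [mem_ES]; simp
  have := ent_mono_insert (Cols n K) ((ES (insert i (insert j V))).erase (edgeOf i j h))
    (edgeOf i j h)
  rwa [Finset.insert_erase hmem] at this

lemma hc_le {n K : ℕ} (V : Finset (Fin n)) (i j : Fin n) (h : i ≠ j) :
    hc K V i j h ≤ Real.log K := by
  have hmem : edgeOf i j h ∈ ES (insert i (insert j V)) := by
    rw [mem_ES]; simp
  have := ent_cond_le (Cols n K) ((ES (insert i (insert j V))).erase (edgeOf i j h))
    (edgeOf i j h)
  rwa [Finset.insert_erase hmem] at this

lemma count_bound {n K m : ℕ} (hm : 0 < m) (hn : m + 3 ≤ n)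
    (hne : (Cols n K).Nonempty) (ε C : ℝ) (hε : 0 ≤ ε) (hC0 : 0 ≤ C)
    (hC : ∀ a b c : Fin K → ℝ, a ∈ stdSimplex ℝ (Fin K) → b ∈ stdSimplex ℝ (Fin K) →
      c ∈ stdSimplex ℝ (Fin K) →
      ∑ x, Real.negMulLog (a x) + ∑ x, Real.negMulLog (b x) + ∑ x, Real.negMulLog (c x) ≤
      3 * Real.log (((K : ℝ) + 2) / 2) + ε +
        C * ∑ x, ∑ y, ∑ z, if TriOK x y z then 0 else a x * b y * c z) :
    Real.log (Cols n K).card ≤ 2 * m * n * Real.log K + (n.choose 2 : ℝ) *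
      (Real.log (((K : ℝ) + 2) / 2) + ε / 3 + C * (Real.log K / m)) := by
  have hm' : (0:ℝ) < m := by exact_mod_cast hm
  let p : Fin n := ⟨n - 1, by omega⟩
  let q : Fin n := ⟨n - 2, by omega⟩
  have hpq : p ≠ q := by
    intro h
    have := congrArg Fin.val h
    simp only [p, q] at this
    omega
  let S : ℕ → Finset (Fin n) := fun s => Finset.univ.filter fun v => v.val < s
  have hScard : ∀ s, (S s).card ≤ s := by
    intro s
    have : (S s).card ≤ (Finset.range s).card := by
      refine Finset.card_le_card_of_injOn (fun v => v.val) ?_ ?_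
      · intro v hv
        simpa [S] using hv
      · intro a _ b _ hab
        exact Fin.ext hab
    simpa using this
  let h : ℕ → ℝ := fun s => hc K (S s) p q hpq
  have hex : ∃ s ∈ Finset.range m, h s - h (s + 1) ≤ Real.log K / m := by
    apply Finset.exists_le_of_sum_le (Finset.nonempty_range_iff.mpr hm.ne')
    rw [Finset.sum_range_sub']
    simp only [Finset.sum_const, Finset.card_range, nsmul_eq_mul]
    have e : (m : ℝ) * (Real.log K / m) = Real.log K := by field_simp
    rw [e]
    have := hc_nonneg (K := K) (S m) p q hpq
    have := hc_le (K := K) (S 0) p q hpq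
    simp only [h]
    linarith
  obtain ⟨s, hs, hd⟩ := hex
  rw [Finset.mem_range] at hs
  let u : Fin n := ⟨s, by omega⟩
  have hup : u ≠ p := by
    intro h
    have := congrArg Fin.val h
    simp only [p, u] at this
    omega
  have huq : u ≠ q := by
    intro h
    have := congrArg Fin.val h
    simp only [q, u] at this
    omega
  have hSs : S (s + 1) = insert u (S s) := by
    ext v
    simp only [S, u, Finset.mem_filter, Finset.mem_univ, true_and, Finset.mem_insert, Fin.ext_iff]
    omega
  have hpS : ∀ t ≤ m, p ∉ S t := by
    intro t ht
    simp only [S, p, Finset.mem_filter, Finset.mem_univ, true_and]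
    omega
  have hqS : ∀ t ≤ m, q ∉ S t := by
    intro t ht
    simp only [S, q, Finset.mem_filter, Finset.mem_univ, true_and]
    omega
  have huS : u ∉ S s := by simp [S, u]
  have main := tri_step hne ε C hC0 hC (S s) u p q hpq hup huq huS (hpS s hs.le) (hqS s hs.le)
  rw [← hSs] at main
  change 3 * h (s + 1) ≤ _ + C * (3 * (h s - h (s + 1))) at main
  have hle : h (s + 1) ≤ Real.log (((K : ℝ) + 2) / 2) + ε / 3 + C * (Real.log K / m) := by
    have := mul_le_mul_of_nonneg_left hd hC0
    linarith
  have cb := chain_bound hne (S (s + 1)) (h (s + 1)) (hc_nonneg _ _ _ _) (by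
    intro i j hij hi hj
    exact (hc_eq K (S (s + 1)) i j p q hij hpq hi hj (hpS _ hs) (hqS _ hs)).le)
  have hc1 : ((S (s + 1)).card : ℝ) ≤ m := by exact_mod_cast (hScard (s + 1)).trans hs
  have hlog := Real.log_natCast_nonneg K
  have hn0 : (0:ℝ) ≤ n := by positivity
  have m1 : 2 * ((S (s + 1)).card : ℝ) * n * Real.log K ≤ 2 * m * n * Real.log K := by
    gcongr
  have m2 := mul_le_mul_of_nonneg_left hle (by positivity : (0:ℝ) ≤ (n.choose 2 : ℝ))
  linarith

lemma count_asymp (k : ℕ) (δ : ℝ) (hδ : 0 < δ) : ∀ᶠ n : ℕ in atTop,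
    Real.log (Cols n (k + 1)).card ≤
      (n.choose 2 : ℝ) * (Real.log ((((k + 1 : ℕ) : ℝ) + 2) / 2) + δ) := by
  obtain ⟨C, hC0, hC⟩ := ent_compact (k + 1) δ hδ
  set lK := Real.log ((k + 1 : ℕ) : ℝ) with hlK
  have hlK0 : 0 ≤ lK := Real.log_natCast_nonneg _
  obtain ⟨m, hm⟩ := exists_nat_gt (C * lK / (δ / 3))
  have hm' : (0:ℝ) < m := lt_of_le_of_lt (by positivity) hm
  have hm0 : 0 < m := by exact_mod_cast hm'
  have hCm : C * (lK / m) ≤ δ / 3 := by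
    rw [div_lt_iff₀ (by positivity)] at hm
    rw [← mul_div_assoc, div_le_iff₀ hm']
    linarith
  obtain ⟨n0, hn0⟩ := exists_nat_gt (12 * m * lK / δ)
  filter_upwards [eventually_ge_atTop (m + 3), eventually_ge_atTop (n0 + 1)] with n h1 h2
  have cb := count_bound hm0 h1 (Cols_nonempty n k) δ C hδ.le hC0 hC
  rw [← hlK] at cb
  have hch : (n.choose 2 : ℝ) = n * (n - 1) / 2 := Nat.cast_choose_two ℝ n
  have hn1 : (n0 : ℝ) ≤ (n : ℝ) - 1 := by
    have : ((n0 + 1 : ℕ) : ℝ) ≤ n := by exact_mod_cast h2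
    push_cast at this
    linarith
  have h3 : 2 * m * n * lK ≤ (n.choose 2 : ℝ) * (δ / 3) := by
    rw [div_lt_iff₀ hδ] at hn0
    have h4 : 12 * m * lK ≤ ((n : ℝ) - 1) * δ :=
      hn0.le.trans (mul_le_mul_of_nonneg_right hn1 hδ.le)
    have h5 := mul_le_mul_of_nonneg_left h4 (by positivity : (0:ℝ) ≤ n)
    rw [hch]
    linarith
  have h6 := mul_le_mul_of_nonneg_left hCm (by positivity : (0:ℝ) ≤ (n.choose 2 : ℝ))
  simp only [mul_add] at cb ⊢
  linarith

end Count

section Volume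
open Finset

lemma dval_edge {n : ℕ} (d : EdgeType n → ℝ) (i j : Fin n) (h : i ≠ j) :
    dval d i j = d (edgeOf i j h) := dif_neg h

lemma volume_box (n : ℕ) (a : EdgeType n → ℝ) (r : ℝ) :
    volume (Set.pi Set.univ fun e => Set.Icc (a e) (a e + r)) =
      ENNReal.ofReal r ^ (n.choose 2) := by
  rw [volume_pi_pi]
  simp [Real.volume_Icc, card_EdgeType]

lemma volume_lower (n : ℕ) :
    ENNReal.ofReal (1 / 2) ^ (n.choose 2) ≤ volume (metricPolytope n) := by
  rw [← volume_box n (fun _ => 1 / 2) (1 / 2)]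
  apply measure_mono
  intro d hd
  have hd' : ∀ e, 1 / 2 ≤ d e ∧ d e ≤ 1 := by
    intro e
    have := hd e (Set.mem_univ e)
    rw [Set.mem_Icc] at this
    constructor <;> linarith [this.1, this.2]
  refine ⟨fun e => ⟨by linarith [(hd' e).1], (hd' e).2⟩, ?_⟩
  intro i j k hij hjk hik
  rw [dval_edge d i j hij, dval_edge d i k hik, dval_edge d k j hjk.symm]
  linarith [(hd' (edgeOf i j hij)).2, (hd' (edgeOf i k hik)).1, (hd' (edgeOf k j hjk.symm)).1]

lemma volume_upper (n k : ℕ) (hk : 0 < k) :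
    volume (metricPolytope n) ≤
      (Cols n (k + 1)).card * ENNReal.ofReal (1 / k) ^ (n.choose 2) := by
  have hk' : (0:ℝ) < k := by exact_mod_cast hk
  have hsub : metricPolytope n ⊆ ⋃ w ∈ Cols n (k + 1),
      Set.pi Set.univ fun e => Set.Icc (((w e : ℕ) : ℝ) / k) (((w e : ℕ) : ℝ) / k + 1 / k) := by
    rintro d ⟨hd, htri⟩
    have hfl : ∀ e, ⌊(k : ℝ) * d e⌋₊ < k + 1 := by
      intro e
      rw [Nat.lt_succ_iff]
      apply Nat.floor_le_of_le
      have := (hd e).2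
      nlinarith
    simp only [Set.mem_iUnion]
    refine ⟨fun e => ⟨⌊(k : ℝ) * d e⌋₊, hfl e⟩, ?_, ?_⟩
    · rw [mem_Cols]
      intro i j l hij hjl hil
      have h1 := htri i j l hij hjl hil
      rw [dval_edge d i j hij, dval_edge d i l hil, dval_edge d l j hjl.symm,
        edgeOf_comm l j] at h1
      change ⌊(k : ℝ) * d (edgeOf i j hij)⌋₊ ≤ ⌊(k : ℝ) * d (edgeOf i l hil)⌋₊ +
        ⌊(k : ℝ) * d (edgeOf j l hjl)⌋₊ + 1
      rw [← Nat.lt_succ_iff]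
      rw [Nat.floor_lt (mul_nonneg hk'.le (hd _).1)]
      have h2 := Nat.lt_floor_add_one ((k : ℝ) * d (edgeOf i l hil))
      have h3 := Nat.lt_floor_add_one ((k : ℝ) * d (edgeOf j l hjl))
      have h4 := mul_le_mul_of_nonneg_left h1 hk'.le
      push_cast
      linarith
    · intro e _
      have h2 := Nat.lt_floor_add_one ((k : ℝ) * d e)
      have h3 := Nat.floor_le (mul_nonneg hk'.le (hd e).1)
      rw [Set.mem_Icc, ← add_div, div_le_iff₀ hk', le_div_iff₀ hk']
      constructor <;> simp only <;> linarith
  refine (measure_mono hsub).trans ((measure_biUnion_finset_le _ _).trans ?_)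
  simp only [volume_box n _ (1 / (k : ℝ))]
  simp

lemma log_volume_bounds (n k : ℕ) (hk : 0 < k) :
    Real.log (volume (metricPolytope n)).toReal ≤
        Real.log (Cols n (k + 1)).card - (n.choose 2 : ℝ) * Real.log k ∧
    -((n.choose 2 : ℝ) * Real.log 2) ≤ Real.log (volume (metricPolytope n)).toReal := by
  have hk' : (0:ℝ) < k := by exact_mod_cast hk
  have hup := volume_upper n k hk
  have hlo := volume_lower n
  have hfin : ((Cols n (k + 1)).card * ENNReal.ofReal (1 / k) ^ (n.choose 2) : ENNReal) ≠ ⊤ :=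
    ENNReal.mul_ne_top (ENNReal.natCast_ne_top _) (ENNReal.pow_ne_top ENNReal.ofReal_ne_top)
  have hvf : volume (metricPolytope n) ≠ ⊤ := ne_top_of_le_ne_top hfin hup
  have h1 := ENNReal.toReal_mono hfin hup
  have h2 := ENNReal.toReal_mono hvf hlo
  rw [ENNReal.toReal_mul, ENNReal.toReal_pow, ENNReal.toReal_ofReal (by positivity),
    ENNReal.toReal_natCast] at h1
  rw [ENNReal.toReal_pow, ENNReal.toReal_ofReal (by positivity)] at h2
  have hpos : (0:ℝ) < (1 / 2) ^ (n.choose 2) := by positivity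
  have hcp : (0:ℝ) < (Cols n (k + 1)).card := by exact_mod_cast (Cols_nonempty n k).card_pos
  constructor
  · have h3 := Real.log_le_log (lt_of_lt_of_le hpos h2) h1
    rw [Real.log_mul hcp.ne' (by positivity), Real.log_pow, one_div, Real.log_inv] at h3
    linarith
  · have h3 := Real.log_le_log hpos h2
    rw [Real.log_pow, one_div, Real.log_inv] at h3
    linarith

end Volume

/-- **Theorem (rough estimate for the volume of the metric polytope).**
`vol(M_n) = (1/2)^{C(n,2) + o(n²)}`, i.e. `(-log vol(M_n))/C(n,2) → log 2`. -/
theorem volume_metric_polytope :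
    Tendsto (fun n : ℕ =>
      -(Real.log ((volume (metricPolytope n)).toReal)) / (n.choose 2 : ℝ))
      atTop (nhds (Real.log 2)) := by
  rw [Metric.tendsto_nhds]
  intro δ hδ
  obtain ⟨k, hk⟩ := exists_nat_gt (3 / (δ / 2))
  have hk' : (0:ℝ) < k := lt_of_le_of_lt (by positivity) hk
  have hk0 : 0 < k := by exact_mod_cast hk'
  have h3k : 3 / (k : ℝ) < δ / 2 := by
    rw [div_lt_iff₀ (by positivity)] at hk
    rw [div_lt_iff₀ hk']
    linarith
  filter_upwards [count_asymp k (δ / 2) (by positivity), eventually_ge_atTop 2] with n hn hn2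
  obtain ⟨hu, hl⟩ := log_volume_bounds n k hk0
  have hch : (0:ℝ) < (n.choose 2 : ℝ) := by exact_mod_cast Nat.choose_pos hn2
  have hlog : Real.log ((((k + 1 : ℕ) : ℝ) + 2) / 2) ≤ Real.log k - Real.log 2 + 3 / k := by
    have e : (((k + 1 : ℕ) : ℝ) + 2) / 2 = (k / 2) * (1 + 3 / k) := by
      push_cast
      field_simp
      ring
    rw [e, Real.log_mul (by positivity) (by positivity), Real.log_div hk'.ne' (by norm_num)]
    have := Real.log_le_sub_one_of_pos (by positivity : (0:ℝ) < 1 + 3 / k)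
    linarith
  rw [Real.dist_eq, abs_lt]
  constructor
  · rw [lt_sub_iff_add_lt, lt_div_iff₀ hch]
    have h1 : Real.log ((((k + 1 : ℕ) : ℝ) + 2) / 2) + δ / 2 - Real.log k < δ - Real.log 2 := by
      linarith
    have h2 := mul_lt_mul_of_pos_left h1 hch
    linarith
  · rw [sub_lt_iff_lt_add, div_lt_iff₀ hch]
    have := mul_pos hδ hch
    linarith

end
end
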